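/- arXiv:2604.02357 — 4 statements merged into one kernel-verified Lean document; each statement's English description precedes it below -/
import Mathlib

section
/- Let n ≥ 1, s ∈ (0,1) and ε > 0. Suppose φ : ℝⁿ → ℝ is continuous, vanishes at infinity, and φ(y) = 0 for all y with |y| ≤ ε. If ∫_{ℝⁿ} φ(y) · |y − x|^{-(n+2s)} dy = 0 for every x ∈ ℝⁿ with |x| < ε (these integrals converge absolutely since φ is bounded, vanishes near x, and n + 2s > n), then φ = 0 everywhere on ℝⁿ. (This is the dual form of the unique continuation principle for the fractional Laplacian (−Δ)^s, equivalently M. Riesz's theorem.) -/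
open MeasureTheory Filter

/-!
Write `a = n + 2s`. Differentiating the potential `x ↦ ∫ φ y |y - x|^(-a) dy` repeatedly in a
direction `v` at `x = 0` produces, up to lower order terms, the integrals of `φ y |y|^(-a)` against
`⟪v, y / |y|²⟫^m`, which are the moments of a compactly supported measure: the image of
`φ |y|^(-a) dy` under the inversion in the unit sphere. The lower order terms are potentials with
exponent `a + 2`. These vanish as well, since `|y|^(-(a + 2))` is a nonzero multiple of the
Laplacian of `|y|^(-a)`. Hence all moments vanish, so the Fourier transform of the inverted measure
vanishes, and `φ = 0`.
-/

section Decay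

variable {E : Type*} [NormedAddCommGroup E] {k : E → ℝ} {C c ε r : ℝ}

theorem norm_sub_rpow_neg_le {x y : E} (hc : 0 ≤ c) (hr : r < ε) (hx : ‖x‖ ≤ r) (hy : ε ≤ ‖y‖) :
    ‖y - x‖ ^ (-c) ≤ (1 - r / ε) ^ (-c) * ‖y‖ ^ (-c) := by
  have hε : 0 < ε := (norm_nonneg x).trans_lt (hx.trans_lt hr)
  have hq : 0 < 1 - r / ε := sub_pos.2 ((div_lt_one hε).2 hr)
  have hr0 : 0 ≤ r / ε := div_nonneg ((norm_nonneg x).trans hx) hε.le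
  have hle : (1 - r / ε) * ‖y‖ ≤ ‖y - x‖ := calc
    (1 - r / ε) * ‖y‖ = ‖y‖ - r / ε * ‖y‖ := by ring
    _ ≤ ‖y‖ - r / ε * ε := by gcongr
    _ = ‖y‖ - r := by field_simp
    _ ≤ ‖y‖ - ‖x‖ := by gcongr
    _ ≤ ‖y - x‖ := norm_sub_norm_le y x
  rw [← Real.mul_rpow hq.le (norm_nonneg y)]
  exact Real.rpow_le_rpow_of_nonpos (mul_pos hq (hε.trans_le hy)) hle (neg_nonpos.2 hc)

theorem abs_comp_sub_le {x y : E} (hk : ∀ w ≠ 0, |k w| ≤ C * ‖w‖ ^ (-c)) (hc : 0 ≤ c) (hr : r < ε)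
    (hx : ‖x‖ ≤ r) (hy : ε ≤ ‖y‖) :
    |k (y - x)| ≤ C * (1 - r / ε) ^ (-c) * ‖y‖ ^ (-c) := by
  have hne : y - x ≠ 0 := sub_ne_zero.2 (ne_of_apply_ne norm (by linarith))
  have hC : 0 ≤ C := nonneg_of_mul_nonneg_left ((abs_nonneg _).trans (hk _ hne))
    (Real.rpow_pos_of_pos (norm_pos_iff.2 hne) _)
  rw [mul_assoc]
  exact (hk _ hne).trans (by gcongr; exact norm_sub_rpow_neg_le hc hr hx hy)

theorem hasDerivAt_comp_sub_line [NormedSpace ℝ E] {x y v : E} {t k' : ℝ}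
    (hk : HasLineDerivAt ℝ k k' (y - (x + t • v)) v) :
    HasDerivAt (fun u : ℝ ↦ k (y - (x + u • v))) (-k') t := by
  have h0 : HasDerivAt (fun u : ℝ ↦ k (y - (x + t • v) + u • v)) k' (t - t) := by
    rwa [sub_self]
  refine (HasDerivAt.comp_const_sub t t h0).congr_of_eventuallyEq (.of_forall fun u ↦ ?_)
  exact congrArg k (by module)

variable [MeasurableSpace E] [BorelSpace E] {μ : Measure E} {φ : E → ℝ}

theorem integrable_mul_norm_rpow_neg_of_le {a : ℝ} (hε : 0 < ε) (hμ : ∀ᵐ y ∂μ, ε ≤ ‖y‖)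
    (hφ : Integrable (fun y ↦ φ y * ‖y‖ ^ (-a)) μ) (hac : a ≤ c) :
    Integrable (fun y ↦ φ y * ‖y‖ ^ (-c)) μ := by
  refine (hφ.mul_bdd (g := fun y ↦ ‖y‖ ^ (a - c)) (c := ε ^ (a - c))
    (measurable_norm.pow_const _).aestronglyMeasurable ?_).congr ?_
  · filter_upwards [hμ] with y hy
    rw [Real.norm_of_nonneg (by positivity)]
    exact Real.rpow_le_rpow_of_nonpos hε hy (sub_nonpos.2 hac)
  · filter_upwards [hμ] with y hy
    rw [mul_assoc, ← Real.rpow_add (hε.trans_le hy)]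
    ring_nf

theorem integrable_mul_comp_sub {x : E} (hμ : ∀ᵐ y ∂μ, ε ≤ ‖y‖) (hkm : Measurable k)
    (hk : ∀ w ≠ 0, |k w| ≤ C * ‖w‖ ^ (-c)) (hc : 0 ≤ c)
    (hφ : Integrable (fun y ↦ φ y * ‖y‖ ^ (-c)) μ) (hx : ‖x‖ < ε) :
    Integrable (fun y ↦ φ y * k (y - x)) μ := by
  have hε : 0 < ε := (norm_nonneg x).trans_lt hx
  refine (hφ.mul_bdd (g := fun y ↦ ‖y‖ ^ c * k (y - x)) (c := C * (1 - ‖x‖ / ε) ^ (-c))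
    (by fun_prop) ?_).congr ?_
  · filter_upwards [hμ] with y hy
    have hy0 : 0 < ‖y‖ := hε.trans_le hy
    rw [norm_mul, Real.norm_of_nonneg (by positivity), Real.norm_eq_abs]
    calc ‖y‖ ^ c * |k (y - x)|
        ≤ ‖y‖ ^ c * (C * (1 - ‖x‖ / ε) ^ (-c) * ‖y‖ ^ (-c)) := by
          gcongr
          exact abs_comp_sub_le hk hc hx le_rfl hy
      _ = C * (1 - ‖x‖ / ε) ^ (-c) := by
          rw [Real.rpow_neg hy0.le]
          field_simp
  · filter_upwards [hμ] with y hy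
    have hy0 : 0 < ‖y‖ := hε.trans_le hy
    rw [Real.rpow_neg hy0.le]
    field_simp

theorem hasLineDerivAt_integral_mul_comp_sub [NormedSpace ℝ E] {k' : E → ℝ} {v x : E}
    (hμ : ∀ᵐ y ∂μ, ε ≤ ‖y‖)
    (hk : ∀ w ≠ 0, HasLineDerivAt ℝ k (k' w) w v)
    (hint : ∀ z, ‖z‖ < ε → Integrable (fun y ↦ φ y * k (y - z)) μ)
    (hkm' : Measurable k') (hk' : ∀ w ≠ 0, |k' w| ≤ C * ‖w‖ ^ (-c)) (hc : 0 ≤ c)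
    (hφ : Integrable (fun y ↦ φ y * ‖y‖ ^ (-c)) μ) (hx : ‖x‖ < ε) :
    HasLineDerivAt ℝ (fun z ↦ ∫ y, φ y * k (y - z) ∂μ) (-∫ y, φ y * k' (y - x) ∂μ) x v := by
  obtain ⟨r, hxr, hrε⟩ := exists_between hx
  have hnear : {t : ℝ | ‖x + t • v‖ < r} ∈ nhds 0 :=
    (isOpen_lt (by fun_prop) (by fun_prop)).mem_nhds (by simpa)
  have hintx := hint x hx
  have hint' := integrable_mul_comp_sub hμ hkm' hk' hc hφ hx
  have key := (hasDerivAt_integral_of_dominated_loc_of_deriv_le (μ := μ) (x₀ := (0 : ℝ))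
    (F := fun t y ↦ φ y * k (y - (x + t • v))) (F' := fun t y ↦ φ y * -k' (y - (x + t • v)))
    (bound := fun y ↦ C * (1 - r / ε) ^ (-c) * ‖φ y * ‖y‖ ^ (-c)‖) hnear
    ?_ (by simpa) (by simpa using hint'.aestronglyMeasurable.fun_neg) ?_ (hφ.norm.const_mul _) ?_).2
  · simpa [HasLineDerivAt, integral_neg] using key
  · filter_upwards [hnear] with t ht
    exact (hint _ (lt_trans ht hrε)).aestronglyMeasurable
  · filter_upwards [hμ] with y hy t ht
    rw [norm_mul, norm_neg, norm_mul, Real.norm_eq_abs (k' _),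
      Real.norm_of_nonneg (Real.rpow_nonneg (norm_nonneg y) _), mul_left_comm]
    gcongr
    exact abs_comp_sub_le hk' hc hrε (le_of_lt ht) hy
  · filter_upwards [hμ] with y hy t ht
    have hlt : ‖x + t • v‖ < ‖y‖ := (lt_trans ht hrε).trans_le hy
    have hne : y - (x + t • v) ≠ 0 := sub_ne_zero.2 (ne_of_apply_ne norm hlt.ne')
    exact (hasDerivAt_comp_sub_line (hk _ hne)).const_mul _

end Decay

section Integrability

variable {E : Type*} [NormedAddCommGroup E] [NormedSpace ℝ E] [FiniteDimensional ℝ E]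
  [MeasurableSpace E] [BorelSpace E] {μ : Measure E} [μ.IsAddHaarMeasure] {a ε : ℝ}

theorem exists_abs_le_of_tendsto_cocompact {X : Type*} [TopologicalSpace X] {f : X → ℝ}
    (hf : Continuous f) (h0 : Tendsto f (cocompact X) (nhds 0)) : ∃ M, ∀ x, |f x| ≤ M :=
  let F : ZeroAtInftyContinuousMap X ℝ := ⟨⟨f, hf⟩, h0⟩
  ⟨‖F.toBCF‖, F.toBCF.norm_coe_le_norm⟩

theorem integrableOn_norm_rpow_neg (hε : 0 < ε)
    (ha : Module.finrank ℝ E < a) : IntegrableOn (fun y ↦ ‖y‖ ^ (-a)) {y | ε ≤ ‖y‖} μ := by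
  have ha0 : 0 ≤ a := (Nat.cast_nonneg _).trans ha.le
  refine ((integrable_one_add_norm ha).integrableOn.const_mul ((1 + ε⁻¹) ^ a)).mono'
    (measurable_norm.pow_const _).aestronglyMeasurable ?_
  filter_upwards [ae_restrict_mem (measurableSet_le measurable_const measurable_norm)] with y hy
  have hle : (1 + ‖y‖) / (1 + ε⁻¹) ≤ ‖y‖ := by
    rw [div_le_iff₀ (by positivity), mul_one_add, add_comm, add_le_add_iff_left,
      ← div_eq_mul_inv, one_le_div hε]
    exact hy
  calc ‖‖y‖ ^ (-a)‖ = ‖y‖ ^ (-a) := Real.norm_of_nonneg (by positivity)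
    _ ≤ ((1 + ‖y‖) / (1 + ε⁻¹)) ^ (-a) :=
      Real.rpow_le_rpow_of_nonpos (by positivity) hle (neg_nonpos.2 ha0)
    _ = (1 + ε⁻¹) ^ a * (1 + ‖y‖) ^ (-a) := by
      rw [Real.div_rpow (by positivity) (by positivity),
        Real.rpow_neg (x := 1 + ε⁻¹) (by positivity), div_inv_eq_mul, mul_comm]

theorem integrable_mul_norm_rpow_neg {φ : E → ℝ} {M : ℝ} (hε : 0 < ε)
    (ha : Module.finrank ℝ E < a) (hφ : AEStronglyMeasurable φ μ) (hM : ∀ y, |φ y| ≤ M)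
    (hvan : ∀ y, ‖y‖ < ε → φ y = 0) : Integrable (fun y ↦ φ y * ‖y‖ ^ (-a)) μ := by
  refine (integrableOn_iff_integrable_of_support_subset (s := {y | ε ≤ ‖y‖}) fun y hy ↦ ?_).1 ?_
  · by_contra hlt
    exact hy (by simp [hvan y (not_le.1 hlt)])
  · exact (integrableOn_norm_rpow_neg hε ha).bdd_mul hφ.restrict (.of_forall hM)

end Integrability

section KelvinMonomial

variable {E : Type*} [NormedAddCommGroup E] [InnerProductSpace ℝ E]

/-- The Kelvin transform `w ↦ ⟪v, w / ‖w‖²⟫ ^ m * ‖w‖ ^ (-a)` of weight `a` of the homogeneous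
polynomial `⟪v, ·⟫ ^ m`, with the powers of `‖w‖` collected in one factor. -/
noncomputable def kelvinMonomial (v : E) (m : ℕ) (a : ℝ) (w : E) : ℝ :=
  inner ℝ v w ^ m * ‖w‖ ^ (-(a + 2 * m))

@[simp]
theorem kelvinMonomial_zero (v : E) (a : ℝ) (w : E) : kelvinMonomial v 0 a w = ‖w‖ ^ (-a) := by
  simp [kelvinMonomial]

theorem kelvinMonomial_eq_inner_inversion (v : E) (m : ℕ) (a : ℝ) {w : E} (hw : w ≠ 0) :
    kelvinMonomial v m a w = inner ℝ v (EuclideanGeometry.inversion 0 1 w) ^ m * ‖w‖ ^ (-a) := by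
  have hw' : 0 < ‖w‖ := norm_pos_iff.2 hw
  have hpow : ‖w‖ ^ (-(a + 2 * m)) = ((1 / ‖w‖) ^ 2) ^ m * ‖w‖ ^ (-a) := by
    rw [neg_add, Real.rpow_add hw', Real.rpow_neg hw'.le (2 * m), Real.rpow_mul hw'.le,
      Real.rpow_natCast, Real.rpow_two, one_div, inv_pow, inv_pow, mul_comm]
  rw [kelvinMonomial, hpow, EuclideanGeometry.inversion, dist_zero_right, vsub_eq_sub, sub_zero,
    vadd_eq_add, add_zero, inner_smul_right, mul_pow]
  ring

theorem norm_inversion_zero_one (w : E) : ‖EuclideanGeometry.inversion 0 1 w‖ = ‖w‖⁻¹ := by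
  simpa using EuclideanGeometry.dist_inversion_center 0 w 1

theorem abs_kelvinMonomial_le (v : E) (m : ℕ) (a : ℝ) {w : E} (hw : w ≠ 0) :
    |kelvinMonomial v m a w| ≤ ‖v‖ ^ m * ‖w‖ ^ (-(a + m)) := by
  have hw' : 0 < ‖w‖ := norm_pos_iff.2 hw
  rw [kelvinMonomial_eq_inner_inversion v m a hw, abs_mul, abs_pow,
    abs_of_nonneg (Real.rpow_nonneg hw'.le _)]
  calc |inner ℝ v (EuclideanGeometry.inversion 0 1 w)| ^ m * ‖w‖ ^ (-a)
      ≤ (‖v‖ * ‖w‖⁻¹) ^ m * ‖w‖ ^ (-a) := by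
        gcongr
        exact (abs_real_inner_le_norm _ _).trans_eq (by rw [norm_inversion_zero_one])
    _ = ‖v‖ ^ m * ‖w‖ ^ (-(a + m)) := by
        rw [neg_add_rev, Real.rpow_add hw', Real.rpow_neg hw'.le m, Real.rpow_natCast, mul_pow,
          inv_pow, mul_assoc]

@[fun_prop]
theorem measurable_kelvinMonomial [MeasurableSpace E] [BorelSpace E] (v : E) (m : ℕ) (a : ℝ) :
    Measurable (kelvinMonomial v m a) := by
  have hinner : Continuous fun w : E ↦ inner ℝ v w := by fun_prop
  exact (hinner.measurable.pow_const m).mul (measurable_norm.pow_const _)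

theorem sum_kelvinMonomial_two {ι : Type*} [Fintype ι] (e : OrthonormalBasis ι ℝ E) (a : ℝ)
    {w : E} (hw : w ≠ 0) : ∑ i, kelvinMonomial (e i) 2 a w = ‖w‖ ^ (-(a + 2)) := by
  simp only [kelvinMonomial, ← Finset.sum_mul, e.sum_sq_inner_right]
  rw [← Real.rpow_two, ← Real.rpow_add (norm_pos_iff.2 hw)]
  congr 1
  push_cast
  ring

theorem hasDerivAt_norm_rpow_of_ne_zero {f : ℝ → E} {f' : E} {t : ℝ} (hf : HasDerivAt f f' t)
    (h0 : f t ≠ 0) (p : ℝ) :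
    HasDerivAt (fun u ↦ ‖f u‖ ^ p) (p * inner ℝ (f t) f' * ‖f t‖ ^ (p - 2)) t := by
  have hpow (z : E) (q : ℝ) : (‖z‖ ^ 2) ^ (q / 2) = ‖z‖ ^ q := by
    rw [← Real.rpow_two, ← Real.rpow_mul (norm_nonneg z)]
    ring_nf
  have h := hf.norm_sq.rpow_const (p := p / 2) (.inl (pow_ne_zero 2 (norm_ne_zero_iff.2 h0)))
  rw [show p / 2 - 1 = (p - 2) / 2 by ring] at h
  simp only [hpow] at h
  exact h.congr_deriv (by ring)

theorem hasLineDerivAt_kelvinMonomial (v : E) (m : ℕ) (a : ℝ) {w : E} (hw : w ≠ 0) :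
    HasLineDerivAt ℝ (kelvinMonomial v m a)
      (m * ‖v‖ ^ 2 * kelvinMonomial v (m - 1) (a + 2) w
        - (a + 2 * m) * kelvinMonomial v (m + 1) a w) w v := by
  have hline : HasDerivAt (fun t : ℝ ↦ w + t • v) v 0 := by
    simpa using ((hasDerivAt_id (0 : ℝ)).smul_const v).const_add w
  have hinner := ((hasDerivAt_const (0 : ℝ) v).inner ℝ hline).pow m
  have hnorm := hasDerivAt_norm_rpow_of_ne_zero hline (by simpa using hw) (-(a + 2 * m))
  refine (hinner.mul hnorm).congr_deriv ?_
  simp only [kelvinMonomial, zero_smul, add_zero, inner_zero_left, real_inner_self_eq_norm_sq,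
    real_inner_comm v, Pi.pow_apply]
  have hsucc : -(a + 2 * (m + 1 : ℕ)) = -(a + 2 * m) - 2 := by push_cast; ring
  rw [hsucc]
  cases m with
  | zero => simp; ring
  | succ m =>
    rw [show a + 2 + 2 * ((m + 1 - 1 : ℕ) : ℝ) = a + 2 * (m + 1 : ℕ) by simp; ring]
    simp only [Nat.add_sub_cancel]
    ring

theorem abs_lineDeriv_kelvinMonomial_le (v : E) (m : ℕ) (a : ℝ) {w : E} (hw : w ≠ 0) :
    |m * ‖v‖ ^ 2 * kelvinMonomial v (m - 1) (a + 2) w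
        - (a + 2 * m) * kelvinMonomial v (m + 1) a w|
      ≤ (m + |a + 2 * m|) * ‖v‖ ^ (m + 1) * ‖w‖ ^ (-(a + (m + 1))) := by
  have hpred : m * ‖v‖ ^ 2 * |kelvinMonomial v (m - 1) (a + 2) w|
      ≤ m * ‖v‖ ^ (m + 1) * ‖w‖ ^ (-(a + (m + 1))) := by
    cases m with
    | zero => simp
    | succ m =>
      refine (mul_le_mul_of_nonneg_left (abs_kelvinMonomial_le v m (a + 2) hw)
        (by positivity)).trans_eq ?_
      push_cast
      ring_nf
  have hsucc := abs_kelvinMonomial_le v (m + 1) a hw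
  push_cast at hsucc
  calc _ ≤ m * ‖v‖ ^ 2 * |kelvinMonomial v (m - 1) (a + 2) w|
        + |a + 2 * m| * |kelvinMonomial v (m + 1) a w| := by
        refine (abs_sub _ _).trans_eq ?_
        simp only [abs_mul, Nat.abs_cast, abs_pow, abs_norm]
    _ ≤ m * ‖v‖ ^ (m + 1) * ‖w‖ ^ (-(a + (m + 1)))
        + |a + 2 * m| * (‖v‖ ^ (m + 1) * ‖w‖ ^ (-(a + (m + 1)))) := by gcongr
    _ = _ := by ring

end KelvinMonomial

section KelvinPotential

variable {E : Type*} [NormedAddCommGroup E] [InnerProductSpace ℝ E] [MeasurableSpace E]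
  {μ : Measure E} {φ : E → ℝ} {a ε : ℝ} {x : E}

/-- The potential at `x` of the signed measure `φ μ` with respect to `kelvinMonomial v m a`; at
`x = 0` it is a moment of the image of `φ ‖·‖ ^ (-a) μ` under the inversion in the unit sphere. -/
noncomputable def kelvinPotential (μ : Measure E) (φ : E → ℝ) (v : E) (m : ℕ) (a : ℝ) (x : E) : ℝ :=
  ∫ y, φ y * kelvinMonomial v m a (y - x) ∂μ

theorem kelvinPotential_zero (v : E) (a : ℝ) (x : E) :
    kelvinPotential μ φ v 0 a x = ∫ y, φ y * ‖y - x‖ ^ (-a) ∂μ := by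
  simp only [kelvinPotential, kelvinMonomial_zero]

variable [BorelSpace E]

theorem integrable_mul_kelvinMonomial {b : ℝ} (hμ : ∀ᵐ y ∂μ, ε ≤ ‖y‖)
    (hφ : Integrable (fun y ↦ φ y * ‖y‖ ^ (-a)) μ) (ha : 0 ≤ a) {v : E} {m : ℕ} (hab : a ≤ b + m)
    (hx : ‖x‖ < ε) : Integrable (fun y ↦ φ y * kelvinMonomial v m b (y - x)) μ :=
  integrable_mul_comp_sub hμ (measurable_kelvinMonomial v m b)
    (fun _ hw ↦ abs_kelvinMonomial_le v m b hw) (ha.trans hab)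
    (integrable_mul_norm_rpow_neg_of_le ((norm_nonneg x).trans_lt hx) hμ hφ hab) hx

theorem hasLineDerivAt_kelvinPotential (hμ : ∀ᵐ y ∂μ, ε ≤ ‖y‖)
    (hφ : Integrable (fun y ↦ φ y * ‖y‖ ^ (-a)) μ) (ha : 0 ≤ a) (v : E) (m : ℕ) (hx : ‖x‖ < ε) :
    HasLineDerivAt ℝ (kelvinPotential μ φ v m a)
      ((a + 2 * m) * kelvinPotential μ φ v (m + 1) a x
        - m * ‖v‖ ^ 2 * kelvinPotential μ φ v (m - 1) (a + 2) x) x v := by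
  have hε : 0 < ε := (norm_nonneg x).trans_lt hx
  have hm : (m : ℝ) ≤ (m - 1 : ℕ) + 1 := by exact_mod_cast le_tsub_add
  have hpred : Integrable (fun y ↦ φ y * kelvinMonomial v (m - 1) (a + 2) (y - x)) μ :=
    integrable_mul_kelvinMonomial hμ hφ ha (by linarith only [hm]) hx
  have hsucc : Integrable (fun y ↦ φ y * kelvinMonomial v (m + 1) a (y - x)) μ :=
    integrable_mul_kelvinMonomial hμ hφ ha (by linarith [Nat.cast_nonneg (α := ℝ) (m + 1)]) hx
  have h := hasLineDerivAt_integral_mul_comp_sub (c := a + (m + 1)) hμ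
    (fun w hw ↦ hasLineDerivAt_kelvinMonomial v m a hw)
    (fun z hz ↦ integrable_mul_kelvinMonomial hμ hφ ha (by simp) hz) (by fun_prop)
    (fun w hw ↦ abs_lineDeriv_kelvinMonomial_le v m a hw) (by positivity)
    (integrable_mul_norm_rpow_neg_of_le hε hμ hφ (by linarith [Nat.cast_nonneg (α := ℝ) m])) hx
  refine HasDerivAt.congr_deriv h ?_
  simp only [mul_sub, mul_left_comm (φ _)]
  rw [integral_sub (hpred.const_mul _) (hsucc.const_mul _), integral_const_mul, integral_const_mul,
    neg_sub]
  rfl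

theorem kelvinPotential_succ_of_eq_zero (hμ : ∀ᵐ y ∂μ, ε ≤ ‖y‖)
    (hφ : Integrable (fun y ↦ φ y * ‖y‖ ^ (-a)) μ) (ha : 0 ≤ a) {v : E} {m : ℕ}
    (h : ∀ z, ‖z‖ < ε → kelvinPotential μ φ v m a z = 0) (hx : ‖x‖ < ε) :
    (a + 2 * m) * kelvinPotential μ φ v (m + 1) a x
      = m * ‖v‖ ^ 2 * kelvinPotential μ φ v (m - 1) (a + 2) x := by
  have hlocal : kelvinPotential μ φ v m a =ᶠ[nhds x] 0 := by
    filter_upwards [(isOpen_lt continuous_norm continuous_const).mem_nhds hx] with z hz using h z hz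
  have hzero : HasLineDerivAt ℝ (kelvinPotential μ φ v m a) 0 x v :=
    ((hasFDerivAt_const (0 : ℝ) x).hasLineDerivAt v).congr_of_eventuallyEq hlocal
  exact sub_eq_zero.1 ((hasLineDerivAt_kelvinPotential hμ hφ ha v m hx).unique hzero)

theorem kelvinPotential_one_eq_zero (hμ : ∀ᵐ y ∂μ, ε ≤ ‖y‖)
    (hφ : Integrable (fun y ↦ φ y * ‖y‖ ^ (-a)) μ) (ha : 0 < a) (v : E)
    (h : ∀ z, ‖z‖ < ε → ∫ y, φ y * ‖y - z‖ ^ (-a) ∂μ = 0) (hx : ‖x‖ < ε) :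
    kelvinPotential μ φ v 1 a x = 0 := by
  simpa [ha.ne'] using kelvinPotential_succ_of_eq_zero hμ hφ ha.le (v := v) (m := 0)
    (by simpa only [kelvinPotential_zero] using h) hx

/-- Reflects the identity `Δ ‖·‖ ^ (-a) = a * (a + 2 - dim) * ‖·‖ ^ (-(a + 2))`. -/
theorem integral_mul_norm_sub_rpow_add_two_eq_zero [FiniteDimensional ℝ E]
    (hμ : ∀ᵐ y ∂μ, ε ≤ ‖y‖) (hφ : Integrable (fun y ↦ φ y * ‖y‖ ^ (-a)) μ) (ha : 0 < a)
    (hdim : Module.finrank ℝ E < a + 2)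
    (h : ∀ z, ‖z‖ < ε → ∫ y, φ y * ‖y - z‖ ^ (-a) ∂μ = 0) (hx : ‖x‖ < ε) :
    ∫ y, φ y * ‖y - x‖ ^ (-(a + 2)) ∂μ = 0 := by
  let e := stdOrthonormalBasis ℝ E
  have hhess (i) : (a + 2) * kelvinPotential μ φ (e i) 2 a x
      = ∫ y, φ y * ‖y - x‖ ^ (-(a + 2)) ∂μ := by
    simpa [kelvinPotential_zero] using
      kelvinPotential_succ_of_eq_zero hμ hφ ha.le (m := 1)
        (fun z hz ↦ kelvinPotential_one_eq_zero hμ hφ ha (e i) h hz) hx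
  have htrace : ∑ i, kelvinPotential μ φ (e i) 2 a x = ∫ y, φ y * ‖y - x‖ ^ (-(a + 2)) ∂μ := by
    unfold kelvinPotential
    rw [← integral_finsetSum _ fun i _ ↦
      integrable_mul_kelvinMonomial hμ hφ ha.le (by simp) hx]
    refine integral_congr_ae ?_
    filter_upwards [hμ] with y hy
    rw [← Finset.mul_sum, sum_kelvinMonomial_two e a
      (sub_ne_zero.2 (ne_of_apply_ne norm (by linarith)))]
  have hscale : (a + 2) * ∫ y, φ y * ‖y - x‖ ^ (-(a + 2)) ∂μ
      = Module.finrank ℝ E * ∫ y, φ y * ‖y - x‖ ^ (-(a + 2)) ∂μ := by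
    nth_rw 1 [← htrace]
    simp [Finset.mul_sum, hhess]
  exact (mul_eq_mul_right_iff.1 hscale).resolve_left hdim.ne'

theorem kelvinPotential_eq_zero [FiniteDimensional ℝ E] (hμ : ∀ᵐ y ∂μ, ε ≤ ‖y‖)
    (hφ : Integrable (fun y ↦ φ y * ‖y‖ ^ (-a)) μ) (ha : 0 < a)
    (hdim : Module.finrank ℝ E < a + 2)
    (h : ∀ z, ‖z‖ < ε → ∫ y, φ y * ‖y - z‖ ^ (-a) ∂μ = 0) (v : E) (m : ℕ) (hx : ‖x‖ < ε) :
    kelvinPotential μ φ v m a x = 0 := by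
  have hε : 0 < ε := (norm_nonneg x).trans_lt hx
  induction m using Nat.twoStepInduction generalizing a x with
  | zero => simpa only [kelvinPotential_zero] using h x hx
  | one => exact kelvinPotential_one_eq_zero hμ hφ ha v h hx
  | more m ih ih_succ =>
    have hpred : kelvinPotential μ φ v m (a + 2) x = 0 :=
      ih (integrable_mul_norm_rpow_neg_of_le hε hμ hφ (by simp)) (by positivity) (by linarith)
        (fun z hz ↦ integral_mul_norm_sub_rpow_add_two_eq_zero hμ hφ ha hdim h hz) hx
    have hrec := kelvinPotential_succ_of_eq_zero hμ hφ ha.le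
      (fun z hz ↦ ih_succ hφ ha hdim h hz) hx
    rw [Nat.add_sub_cancel, hpred, mul_zero] at hrec
    exact (mul_eq_zero.1 hrec).resolve_left (by positivity)

end KelvinPotential

section Moments

open Complex

variable {F : Type*} [NormedAddCommGroup F] [InnerProductSpace ℝ F] [MeasurableSpace F]
  {ν : Measure F} {g : F → ℝ}

theorem charFun_withDensity_ofReal (hg : AEMeasurable g ν) (v : F) :
    charFun (ν.withDensity fun z ↦ ENNReal.ofReal (g z)) v
      = ∫ z, ((max (g z) 0 : ℝ) : ℂ) * exp (inner ℝ z v * I) ∂ν := by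
  rw [charFun_apply, integral_withDensity_eq_integral_toReal_smul₀ hg.ennreal_ofReal
    (.of_forall fun _ ↦ ENNReal.ofReal_lt_top)]
  simp only [ENNReal.toReal_ofReal', real_smul]

variable [BorelSpace F]

theorem integral_mul_exp_inner_eq_zero_of_moments {R : ℝ} (hg : Integrable g ν)
    (hR : ∀ᵐ z ∂ν, ‖z‖ ≤ R) (hmom : ∀ (v : F) (m : ℕ), ∫ z, g z * inner ℝ v z ^ m ∂ν = 0) (v : F) :
    ∫ z, (g z : ℂ) * exp (inner ℝ z v * I) ∂ν = 0 := by
  have hinner : Continuous fun z : F ↦ inner ℝ v z := by fun_prop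
  have hterm (m : ℕ) :
      ∫ z, (g z : ℂ) * ((inner ℝ v z * I) ^ m / m.factorial) ∂ν = 0 := by
    have hpull (z : F) : (g z : ℂ) * ((inner ℝ v z * I) ^ m / m.factorial)
        = I ^ m / m.factorial * ((g z * inner ℝ v z ^ m : ℝ) : ℂ) := by
      push_cast
      ring
    simp only [hpull, integral_const_mul, integral_complex_ofReal, hmom, ofReal_zero, mul_zero]
  have hsum := hasSum_integral_of_dominated_convergence (μ := ν)
    (F := fun (m : ℕ) z ↦ (g z : ℂ) * ((inner ℝ v z * I) ^ m / m.factorial))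
    (f := fun z ↦ (g z : ℂ) * exp (inner ℝ z v * I))
    (fun (m : ℕ) z ↦ |g z| * ((‖v‖ * R) ^ m / m.factorial))
    (fun m ↦ ?_) (fun m ↦ ?_) ?_ ?_ (Eventually.of_forall fun z ↦ ?_)
  · simp only [hterm] at hsum
    exact hsum.unique hasSum_zero
  · exact (continuous_ofReal.comp_aestronglyMeasurable hg.1).mul
      (((measurable_ofReal.comp hinner.measurable).mul_const I).pow_const m |>.div_const
        _).aestronglyMeasurable
  · filter_upwards [hR] with z hz
    simp only [norm_mul, norm_div, norm_pow, norm_real, norm_I, mul_one, Real.norm_eq_abs,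
      Complex.norm_natCast]
    gcongr
    exact (abs_real_inner_le_norm v z).trans (by gcongr)
  · exact .of_forall fun z ↦ (Real.summable_pow_div_factorial _).mul_left _
  · simp only [tsum_mul_left]
    exact hg.abs.mul_const _
  · rw [exp_eq_exp_ℂ, real_inner_comm v]
    exact (NormedSpace.expSeries_div_hasSum_exp ((inner ℝ v z : ℂ) * I)).mul_left _

theorem ae_eq_zero_of_integral_mul_exp_inner_eq_zero [CompleteSpace F] [SecondCountableTopology F]
    (hg : Integrable g ν) (hfourier : ∀ v : F, ∫ z, (g z : ℂ) * exp (inner ℝ z v * I) ∂ν = 0) :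
    g =ᵐ[ν] 0 := by
  have hint {f : F → ℝ} (hf : Integrable f ν) (v : F) :
      Integrable (fun z ↦ ((max (f z) 0 : ℝ) : ℂ) * exp (inner ℝ z v * I)) ν :=
    (hf.pos_part.ofReal (𝕜 := ℂ)).mul_bdd (c := 1)
      (by fun_prop : Measurable fun z : F ↦ exp (inner ℝ z v * I)).aestronglyMeasurable
      (.of_forall fun z ↦ (norm_exp_ofReal_mul_I _).le)
  have := isFiniteMeasure_withDensity_ofReal hg.2
  have := isFiniteMeasure_withDensity_ofReal hg.fun_neg.2
  have hparts : ν.withDensity (fun z ↦ ENNReal.ofReal (g z))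
      = ν.withDensity fun z ↦ ENNReal.ofReal (-g z) := by
    refine Measure.ext_of_charFun (funext fun v ↦ ?_)
    rw [charFun_withDensity_ofReal hg.1.aemeasurable,
      charFun_withDensity_ofReal hg.1.aemeasurable.fun_neg, ← sub_eq_zero,
      ← integral_sub (hint hg v) (hint hg.fun_neg v), ← hfourier v]
    congr 1 with z
    rw [← sub_mul, ← ofReal_sub, max_zero_sub_eq_self]
  refine hg.ae_eq_of_withDensityᵥ_eq (integrable_zero _ _ _) ?_
  rw [withDensityᵥ_eq_withDensity_pos_part_sub_withDensity_neg_part hg, withDensityᵥ_zero]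
  simp only [hparts, sub_self]

theorem ae_eq_zero_of_moments [CompleteSpace F] [SecondCountableTopology F] {R : ℝ}
    (hg : Integrable g ν) (hR : ∀ᵐ z ∂ν, ‖z‖ ≤ R)
    (hmom : ∀ (v : F) (m : ℕ), ∫ z, g z * inner ℝ v z ^ m ∂ν = 0) : g =ᵐ[ν] 0 :=
  ae_eq_zero_of_integral_mul_exp_inner_eq_zero hg
    (integral_mul_exp_inner_eq_zero_of_moments hg hR hmom)

end Moments

section Riesz

variable {E : Type*} [NormedAddCommGroup E] [InnerProductSpace ℝ E] [MeasurableSpace E]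
  [BorelSpace E] {μ : Measure E} {φ : E → ℝ} {a ε : ℝ}

open EuclideanGeometry in
theorem ae_eq_zero_of_kelvinPotential_eq_zero [CompleteSpace E] [SecondCountableTopology E]
    (hε : 0 < ε) (hμ : ∀ᵐ y ∂μ, ε ≤ ‖y‖) (hφ : Integrable (fun y ↦ φ y * ‖y‖ ^ (-a)) μ)
    (h : ∀ v m, kelvinPotential μ φ v m a 0 = 0) : φ =ᵐ[μ] 0 := by
  have hinv : Function.Involutive (inversion (0 : E) 1) := inversion_involutive 0 one_ne_zero
  have hmeas : Measurable (inversion (0 : E) 1) := by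
    unfold inversion
    simp only [vsub_eq_sub, vadd_eq_add]
    fun_prop
  have hemb : MeasurableEmbedding (inversion (0 : E) 1) :=
    (MeasurableEquiv.ofInvolutive _ hinv hmeas).measurableEmbedding
  let g (z : E) : ℝ := φ (inversion 0 1 z) * ‖inversion 0 1 z‖ ^ (-a)
  have hg (y : E) : g (inversion 0 1 y) = φ y * ‖y‖ ^ (-a) := by simp only [g, hinv y]
  have hgint : Integrable g (μ.map (inversion 0 1)) := by
    simpa only [hemb.integrable_map_iff, Function.comp_def, hg] using hφ
  have hbdd : ∀ᵐ z ∂μ.map (inversion 0 1), ‖z‖ ≤ ε⁻¹ := by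
    rw [hemb.ae_map_iff]
    filter_upwards [hμ] with y hy
    rw [norm_inversion_zero_one]
    gcongr
  have hmom (v : E) (m : ℕ) : ∫ z, g z * inner ℝ v z ^ m ∂μ.map (inversion 0 1) = 0 := by
    rw [hemb.integral_map, ← h v m, kelvinPotential]
    refine integral_congr_ae ?_
    filter_upwards [hμ] with y hy
    rw [hg, sub_zero, kelvinMonomial_eq_inner_inversion v m a (norm_pos_iff.1 (hε.trans_le hy))]
    ring
  filter_upwards [hemb.ae_map_iff.1 (ae_eq_zero_of_moments hgint hbdd hmom), hμ] with y hy hεy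
  rw [hg] at hy
  exact (mul_eq_zero.1 hy).resolve_right (Real.rpow_pos_of_pos (hε.trans_le hεy) _).ne'

theorem fractional_laplacian_ucp_dual_general [FiniteDimensional ℝ E] (hε : 0 < ε) (ha : 0 < a)
    (hdim : Module.finrank ℝ E < a + 2) (hvan : ∀ᵐ y ∂μ, ‖y‖ < ε → φ y = 0)
    (hφ : Integrable (fun y ↦ φ y * ‖y‖ ^ (-a)) μ)
    (hker : ∀ x, ‖x‖ < ε → ∫ y, φ y * ‖y - x‖ ^ (-a) ∂μ = 0) : φ =ᵐ[μ] 0 := by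
  have hmeas : MeasurableSet {y : E | ε ≤ ‖y‖} := measurableSet_le measurable_const measurable_norm
  have hoff : ∀ᵐ y ∂μ.restrict {y | ε ≤ ‖y‖}, ε ≤ ‖y‖ := ae_restrict_mem hmeas
  have hker_off (x : E) (hx : ‖x‖ < ε) :
      ∫ y in {y | ε ≤ ‖y‖}, φ y * ‖y - x‖ ^ (-a) ∂μ = 0 := by
    rw [setIntegral_eq_integral_of_ae_compl_eq_zero, hker x hx]
    filter_upwards [hvan] with y hy hyε
    rw [hy (not_le.1 hyε), zero_mul]
  have hzero_off : φ =ᵐ[μ.restrict {y | ε ≤ ‖y‖}] 0 :=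
    ae_eq_zero_of_kelvinPotential_eq_zero hε hoff hφ.restrict fun v m ↦
      kelvinPotential_eq_zero hoff hφ.restrict ha hdim hker_off v m (by simpa using hε)
  filter_upwards [hvan, (ae_restrict_iff' hmeas).1 hzero_off] with y hin hout
  exact (lt_or_ge ‖y‖ ε).elim hin hout

end Riesz

/-- Dual form of the unique continuation principle for the fractional Laplacian `(-Δ)^s`:
if a continuous function `φ` vanishing at infinity vanishes on the closed ball of radius `ε`
and annihilates all the translated Riesz kernels `y ↦ |y - x|^{-(n+2s)}`, `|x| < ε`,
then `φ ≡ 0`. -/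
theorem fractional_laplacian_ucp_dual
    (n : ℕ) (hn : 1 ≤ n) (s : ℝ) (hs : s ∈ Set.Ioo (0 : ℝ) 1)
    (ε : ℝ) (hε : 0 < ε)
    (φ : EuclideanSpace ℝ (Fin n) → ℝ)
    (hcont : Continuous φ)
    (hinf : Tendsto φ (cocompact (EuclideanSpace ℝ (Fin n))) (nhds 0))
    (hvan : ∀ y : EuclideanSpace ℝ (Fin n), ‖y‖ ≤ ε → φ y = 0)
    (hker : ∀ x : EuclideanSpace ℝ (Fin n), ‖x‖ < ε →
      ∫ y : EuclideanSpace ℝ (Fin n), φ y * ‖y - x‖ ^ (-((n : ℝ) + 2 * s)) = 0) :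
    φ = 0 := by
  have hs0 : 0 < s := hs.1
  have hvan' (y) (hy : ‖y‖ < ε) : φ y = 0 := hvan y hy.le
  obtain ⟨M, hM⟩ := exists_abs_le_of_tendsto_cocompact hcont hinf
  have hint := integrable_mul_norm_rpow_neg (μ := volume) (a := n + 2 * s) hε (by simpa)
    hcont.aestronglyMeasurable hM hvan'
  have hae : φ =ᵐ[volume] 0 :=
    fractional_laplacian_ucp_dual_general hε (by positivity) (by simp; linarith)
      (.of_forall hvan') hint hker
  exact (hcont.ae_eq_iff_eq volume continuous_zero).1 hae
end

section
/- Let r, s ∈ (0,1), c₁, c₂ > 0, and ε > 0. Define the kernel k : ℝ \ {0} → (0,∞) by k(w) = c₁·|w|^{-(1+2r)} for w < 0 and k(w) = c₂·|w|^{-(1+2s)} for w > 0. Suppose φ : ℝ → ℝ is continuous, vanishes at infinity, and φ(y) = 0 for all |y| ≤ ε. If ∫_ℝ φ(y) · k(y − x) dy = 0 for every x with |x| < ε, then φ = 0 everywhere on ℝ. (Unique continuation for one-dimensional, possibly non-symmetric stable-type Lévy operators.) -/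
open MeasureTheory Filter

/-!
The kernel identity says that two one-sided Stieltjes-type transforms cancel near `0`: that of
`φ` on `(ε, ∞)`, which is holomorphic in `re z < ε`, and that of the reflection of `φ`, evaluated
at `-z` and hence holomorphic in `re z > -ε`. Up to sign they coincide on the strip, so they glue
to an entire function. Each is bounded on its closed half-plane away from the singularities,
and Liouville's theorem makes both constant. The derivatives of a constant transform at `0`
are, up to nonzero factors, the moments of `φ y / y ^ (a + 1)` against the powers of `1 / y`;
since `1 / y` ranges over a bounded interval, Weierstrass approximation forces `φ = 0`.
-/

open Set Topology

section Moments

theorem continuous_comp_inv₀_of_tendsto_cobounded {𝕜 X : Type*} [NormedField 𝕜]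
    [TopologicalSpace X] {g : 𝕜 → X} (hg : Continuous g)
    (hinf : Tendsto g (Bornology.cobounded 𝕜) (𝓝 (g 0))) : Continuous fun x => g x⁻¹ := by
  refine continuous_iff_continuousAt.2 fun x => ?_
  rcases eq_or_ne x 0 with rfl | hx
  · rw [continuousAt_iff_punctured_nhds, inv_zero]
    exact hinf.comp tendsto_inv₀_nhdsNE_zero
  · exact hg.continuousAt.comp (continuousAt_inv₀ hx)

variable {α E : Type*} [MeasurableSpace α] {μ : Measure α} [NormedAddCommGroup E]
  [NormedSpace ℝ E] {u : α → ℝ} {f : α → E} {a b : ℝ}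

theorem integrable_comp_smul_of_mem_Icc (hu : AEMeasurable u μ)
    (hab : ∀ᵐ x ∂μ, u x ∈ Icc a b) (hf : Integrable f μ) {g : ℝ → ℝ} (hg : Continuous g) :
    Integrable (fun x => g (u x) • f x) μ := by
  obtain ⟨C, hC⟩ := isCompact_Icc.exists_bound_of_continuousOn (hg.continuousOn (s := Icc a b))
  exact hf.bdd_smul C (hg.comp_aestronglyMeasurable hu.aestronglyMeasurable)
    (hab.mono fun x hx => hC _ hx)

theorem integral_polynomial_eval_smul_eq_zero (hu : AEMeasurable u μ)
    (hab : ∀ᵐ x ∂μ, u x ∈ Icc a b) (hf : Integrable f μ)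
    (hmom : ∀ n : ℕ, ∫ x, u x ^ n • f x ∂μ = 0) (p : Polynomial ℝ) :
    ∫ x, p.eval (u x) • f x ∂μ = 0 := by
  induction p using Polynomial.induction_on' with
  | add p q hp hq =>
    simp only [Polynomial.eval_add, add_smul]
    rw [integral_add (integrable_comp_smul_of_mem_Icc hu hab hf p.continuous)
      (integrable_comp_smul_of_mem_Icc hu hab hf q.continuous), hp, hq, add_zero]
  | monomial n c =>
    simp only [Polynomial.eval_monomial, mul_smul]
    rw [integral_smul, hmom, smul_zero]

theorem integral_comp_smul_eq_zero_of_integral_pow_smul_eq_zero (hu : AEMeasurable u μ)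
    (hab : ∀ᵐ x ∂μ, u x ∈ Icc a b) (hf : Integrable f μ)
    (hmom : ∀ n : ℕ, ∫ x, u x ^ n • f x ∂μ = 0) {g : ℝ → ℝ} (hg : Continuous g) :
    ∫ x, g (u x) • f x ∂μ = 0 := by
  have hbound : ∀ δ > 0, ‖∫ x, g (u x) • f x ∂μ‖ ≤ δ * ∫ x, ‖f x‖ ∂μ := by
    intro δ hδ
    obtain ⟨p, hp⟩ := exists_polynomial_near_of_continuousOn a b g hg.continuousOn δ hδ
    have hsub : ∫ x, g (u x) • f x ∂μ = ∫ x, (g (u x) - p.eval (u x)) • f x ∂μ := by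
      simp only [sub_smul]
      rw [integral_sub (integrable_comp_smul_of_mem_Icc hu hab hf hg)
        (integrable_comp_smul_of_mem_Icc hu hab hf p.continuous),
        integral_polynomial_eval_smul_eq_zero hu hab hf hmom, sub_zero]
    rw [hsub, ← integral_const_mul]
    refine norm_integral_le_of_norm_le (hf.norm.const_mul δ) (hab.mono fun x hx => ?_)
    rw [norm_smul, norm_sub_rev]
    exact mul_le_mul_of_nonneg_right (hp _ hx).le (norm_nonneg _)
  have hlim : Tendsto (fun δ => δ * ∫ x, ‖f x‖ ∂μ) (𝓝[>] 0) (𝓝 0) :=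
    ((continuous_mul_const _).tendsto' 0 0 (zero_mul _)).mono_left nhdsWithin_le_nhds
  exact norm_le_zero_iff.1 (ge_of_tendsto hlim (eventually_mem_nhdsWithin.mono hbound))

theorem ae_eq_zero_of_integral_inv_pow_smul_eq_zero [CompleteSpace E] {μ : Measure ℝ} {f : ℝ → E}
    {ε : ℝ} (hε : 0 < ε) (hμ : ∀ᵐ y ∂μ, ε ≤ y) (hf : Integrable f μ)
    (hmom : ∀ n : ℕ, ∫ y, y⁻¹ ^ n • f y ∂μ = 0) : f =ᵐ[μ] 0 := by
  have hinv : ∀ᵐ y ∂μ, y⁻¹ ∈ Icc 0 ε⁻¹ := hμ.mono fun y hy =>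
    ⟨inv_nonneg.2 (hε.le.trans hy), inv_anti₀ hε hy⟩
  have hpos := isOpen_Ioi.ae_eq_zero_of_integral_contDiff_smul_eq_zero (U := Ioi (0 : ℝ))
    (hf.locallyIntegrable.locallyIntegrableOn _) fun g hg hgc hgs => by
      have hg0 : g 0 = 0 := image_eq_zero_of_notMem_tsupport fun h => lt_irrefl (0 : ℝ) (hgs h)
      have hginf : Tendsto g (Bornology.cobounded ℝ) (𝓝 (g 0)) := by
        rw [hg0, Metric.cobounded_eq_cocompact]
        exact hgc.is_zero_at_infty
      simpa using integral_comp_smul_eq_zero_of_integral_pow_smul_eq_zero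
        measurable_inv.aemeasurable hinv hf hmom
        (continuous_comp_inv₀_of_tendsto_cobounded hg.continuous hginf)
  filter_upwards [hpos, hμ] with y hy hεy using hy (hε.trans_le hεy)

end Moments

section HalfPlanes

theorem exists_eq_const_of_frequently_eq_of_halfPlanes {E : Type*} [NormedAddCommGroup E]
    [NormedSpace ℂ E] [CompleteSpace E] {f g : ℂ → E} {ε A B : ℝ} (hε : 0 < ε)
    (hf : DifferentiableOn ℂ f {z | z.re < ε}) (hg : DifferentiableOn ℂ g {z | -ε < z.re})
    (hfA : ∀ z : ℂ, z.re ≤ 0 → ‖f z‖ ≤ A) (hgB : ∀ z : ℂ, 0 ≤ z.re → ‖g z‖ ≤ B)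
    (hfg : ∃ᶠ z in 𝓝[≠] 0, f z = g z) :
    ∃ C, (∀ z : ℂ, z.re < ε → f z = C) ∧ ∀ z : ℂ, -ε < z.re → g z = C := by
  have hleft : IsOpen {z : ℂ | z.re < ε} := isOpen_lt Complex.continuous_re continuous_const
  have hright : IsOpen {z : ℂ | -ε < z.re} := isOpen_lt continuous_const Complex.continuous_re
  have hstrip : EqOn f g ({z | z.re < ε} ∩ {z | -ε < z.re}) :=
    AnalyticOnNhd.eqOn_of_preconnected_of_frequently_eq
      ((hf.mono inter_subset_left).analyticOnNhd (hleft.inter hright))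
      ((hg.mono inter_subset_right).analyticOnNhd (hleft.inter hright))
      ((convex_halfSpace_re_lt ε).inter (convex_halfSpace_re_gt (-ε))).isPreconnected
      (by simp [hε]) hfg
  let F : ℂ → E := fun z => if z.re < ε then f z else g z
  have hFf : EqOn F f {z | z.re < ε} := fun z hz => if_pos hz
  have hFg : EqOn F g {z | -ε < z.re} := fun z hz => by
    by_cases hz' : z.re < ε
    · exact (if_pos hz').trans (hstrip ⟨hz', hz⟩)
    · exact if_neg hz'
  have hFd : Differentiable ℂ F := fun z => by
    rcases le_total z.re 0 with hz | hz
    · exact ((hf.congr hFf).differentiableAt (hleft.mem_nhds (hz.trans_lt hε)))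
    · exact ((hg.congr hFg).differentiableAt (hright.mem_nhds ((neg_lt_zero.2 hε).trans_le hz)))
  have hFb : Bornology.IsBounded (range F) := by
    refine isBounded_iff_forall_norm_le.2 ⟨max A B, forall_mem_range.2 fun z => ?_⟩
    rcases le_total z.re 0 with hz | hz
    · rw [hFf (hz.trans_lt hε)]
      exact le_max_of_le_left (hfA z hz)
    · rw [hFg ((neg_lt_zero.2 hε).trans_le hz)]
      exact le_max_of_le_right (hgB z hz)
  have hconst (z : ℂ) : F z = F 0 := hFd.apply_eq_apply_of_bounded hFb z 0
  exact ⟨F 0, fun z hz => (hFf hz).symm.trans (hconst z),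
    fun z hz => (hFg hz).symm.trans (hconst z)⟩

end HalfPlanes

section RpowWeight

variable {E : Type*} [NormedAddCommGroup E] [NormedSpace ℝ E] {μ : Measure ℝ} {φ : ℝ → E}
  {a b ε : ℝ}

theorem aestronglyMeasurable_of_rpow_smul (hε : 0 < ε) (hμ : ∀ᵐ y ∂μ, ε ≤ y)
    (hφ : AEStronglyMeasurable (fun y => y ^ (-a) • φ y) μ) : AEStronglyMeasurable φ μ := by
  have hmul : AEStronglyMeasurable (fun y => y ^ a • y ^ (-a) • φ y) μ :=
    (Measurable.aestronglyMeasurable (by fun_prop)).smul hφ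
  refine hmul.congr (hμ.mono fun y hy => ?_)
  simp only
  rw [smul_smul, ← Real.rpow_add (hε.trans_le hy), add_neg_cancel, Real.rpow_zero, one_smul]

theorem integrable_rpow_smul_of_le (hε : 0 < ε) (hμ : ∀ᵐ y ∂μ, ε ≤ y) (hab : a ≤ b)
    (hφ : Integrable (fun y => y ^ (-a) • φ y) μ) : Integrable (fun y => y ^ (-b) • φ y) μ := by
  have hbdd : Integrable (fun y => y ^ (-(b - a)) • y ^ (-a) • φ y) μ := by
    refine hφ.bdd_smul (ε ^ (-(b - a))) (Measurable.aestronglyMeasurable (by fun_prop))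
      (hμ.mono fun y hy => ?_)
    rw [Real.norm_of_nonneg (Real.rpow_nonneg (hε.le.trans hy) _)]
    exact Real.rpow_le_rpow_of_nonpos hε hy (neg_nonpos.2 (sub_nonneg.2 hab))
  refine hbdd.congr (hμ.mono fun y hy => ?_)
  simp only
  rw [smul_smul, ← Real.rpow_add (hε.trans_le hy)]
  congr 2
  ring

end RpowWeight

section StieltjesTransform

variable {E : Type*} [NormedAddCommGroup E] [NormedSpace ℂ E] {μ ν : Measure ℝ} {φ ψ : ℝ → E}
  {a b δ ε : ℝ} {z : ℂ}

/-- The generalized Stieltjes transform of order `a` of the vector measure `φ dμ`. For `μ` carried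
by `[ε, ∞)` it is considered on the half-plane `re z < ε`, where `y - z` avoids the branch cut of
the complex power. -/
noncomputable def stieltjesTransform (μ : Measure ℝ) (a : ℝ) (φ : ℝ → E) (z : ℂ) : E :=
  ∫ y, ((y : ℂ) - z) ^ (-(a : ℂ)) • φ y ∂μ

theorem cpow_ofReal_sub_ofReal {x y : ℝ} (hxy : x ≤ y) (a : ℝ) :
    ((y : ℂ) - x) ^ (-(a : ℂ)) = ((y - x) ^ (-a) : ℝ) := by
  rw [Complex.ofReal_cpow (sub_nonneg.2 hxy)]
  push_cast
  rfl

theorem norm_cpow_neg_le {c y : ℝ} {w : ℂ} (ha : 0 ≤ a) (hc : 0 < c) (hy : 0 < y)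
    (h : c * y ≤ ‖w‖) : ‖w ^ (-(a : ℂ))‖ ≤ c ^ (-a) * y ^ (-a) := by
  rw [← Complex.ofReal_neg, Complex.norm_cpow_real, ← Real.mul_rpow hc.le hy.le]
  exact Real.rpow_le_rpow_of_nonpos (mul_pos hc hy) h (neg_nonpos.2 ha)

theorem one_sub_div_mul_le_norm_ofReal_sub {y : ℝ} (hε : 0 < ε) (hδ : 0 ≤ δ) (hz : z.re ≤ δ)
    (hy : ε ≤ y) : (1 - δ / ε) * y ≤ ‖(y : ℂ) - z‖ :=
  calc (1 - δ / ε) * y = y - δ * (y / ε) := by ring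
    _ ≤ y - δ * 1 := by gcongr; exact (one_le_div hε).2 hy
    _ ≤ ((y : ℂ) - z).re := by simpa using sub_le_sub_left hz y
    _ ≤ ‖(y : ℂ) - z‖ := Complex.re_le_norm _

theorem norm_cpow_ofReal_sub_le {y : ℝ} (ha : 0 ≤ a) (hδ : 0 ≤ δ) (hδε : δ < ε)
    (hz : z.re ≤ δ) (hy : ε ≤ y) :
    ‖((y : ℂ) - z) ^ (-(a : ℂ))‖ ≤ (1 - δ / ε) ^ (-a) * y ^ (-a) :=
  have hε : 0 < ε := hδ.trans_lt hδε
  norm_cpow_neg_le ha (sub_pos.2 ((div_lt_one hε).2 hδε)) (hε.trans_le hy)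
    (one_sub_div_mul_le_norm_ofReal_sub hε hδ hz hy)

theorem norm_cpow_ofReal_sub_smul_le {y : ℝ} (ha : 0 ≤ a) (hδ : 0 ≤ δ) (hδε : δ < ε)
    (hz : z.re ≤ δ) (hy : ε ≤ y) (v : E) :
    ‖((y : ℂ) - z) ^ (-(a : ℂ)) • v‖ ≤ (1 - δ / ε) ^ (-a) * ‖y ^ (-a) • v‖ := by
  have hy0 : 0 ≤ y := (hδ.trans hδε.le).trans hy
  rw [norm_smul, norm_smul, Real.norm_of_nonneg (Real.rpow_nonneg hy0 _), ← mul_assoc]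
  gcongr
  exact norm_cpow_ofReal_sub_le ha hδ hδε hz hy

theorem aestronglyMeasurable_cpow_ofReal_sub_smul (hφ : AEStronglyMeasurable φ μ) (a : ℝ)
    (z : ℂ) : AEStronglyMeasurable (fun y : ℝ => ((y : ℂ) - z) ^ (-(a : ℂ)) • φ y) μ :=
  (Measurable.aestronglyMeasurable (by fun_prop)).smul hφ

theorem integrable_cpow_ofReal_sub_smul (hε : 0 < ε) (ha : 0 ≤ a) (hμ : ∀ᵐ y ∂μ, ε ≤ y)
    (hφ : Integrable (fun y => y ^ (-a) • φ y) μ) (hz : z.re < ε) :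
    Integrable (fun y : ℝ => ((y : ℂ) - z) ^ (-(a : ℂ)) • φ y) μ :=
  Integrable.mono' (hφ.norm.const_mul _)
    (aestronglyMeasurable_cpow_ofReal_sub_smul
      (aestronglyMeasurable_of_rpow_smul hε hμ hφ.aestronglyMeasurable) a z)
    (hμ.mono fun y hy => norm_cpow_ofReal_sub_smul_le ha (le_max_right z.re 0) (max_lt hz hε)
      (le_max_left _ _) hy (φ y))

theorem hasDerivAt_cpow_ofReal_sub {y : ℝ} (hz : z.re < y) (a : ℝ) :
    HasDerivAt (fun w : ℂ => ((y : ℂ) - w) ^ (-(a : ℂ)))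
      (a * ((y : ℂ) - z) ^ (-((a + 1 : ℝ) : ℂ))) z := by
  have hslit : (y : ℂ) - z ∈ Complex.slitPlane := Or.inl (by simpa using hz)
  convert! ((hasDerivAt_id z).const_sub (y : ℂ)).cpow_const (c := -(a : ℂ)) hslit using 1
  rw [Complex.ofReal_add, Complex.ofReal_one, neg_add']
  simp

theorem hasDerivAt_stieltjesTransform (hε : 0 < ε) (ha : 0 ≤ a) (hμ : ∀ᵐ y ∂μ, ε ≤ y)
    (hφ : Integrable (fun y => y ^ (-a) • φ y) μ) (hz : z.re < ε) :
    HasDerivAt (stieltjesTransform μ a φ) ((a : ℂ) • stieltjesTransform μ (a + 1) φ z) z := by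
  obtain ⟨δ, hzδ, hδε⟩ := exists_between (max_lt hz hε)
  obtain ⟨hzδ, hδ⟩ := max_lt_iff.1 hzδ
  have hφm := aestronglyMeasurable_of_rpow_smul hε hμ hφ.aestronglyMeasurable
  have hmeas (s : ℝ) (w : ℂ) := aestronglyMeasurable_cpow_ofReal_sub_smul hφm s w
  have hφ' := integrable_rpow_smul_of_le hε hμ (lt_add_one a).le hφ
  have hderiv := (hasDerivAt_integral_of_dominated_loc_of_deriv_le
    (F' := fun w y => (a : ℂ) • ((y : ℂ) - w) ^ (-((a + 1 : ℝ) : ℂ)) • φ y)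
    (bound := fun y => ‖(a : ℂ)‖ * ((1 - δ / ε) ^ (-(a + 1)) * ‖y ^ (-(a + 1)) • φ y‖))
    ((isOpen_lt Complex.continuous_re continuous_const).mem_nhds hzδ)
    (.of_forall (hmeas a)) (integrable_cpow_ofReal_sub_smul hε ha hμ hφ hz)
    ((hmeas (a + 1) z).const_smul _) (hμ.mono fun y hy w hw => ?_)
    ((hφ'.norm.const_mul _).const_mul _) (hμ.mono fun y hy w hw => ?_)).2
  · rwa [integral_smul] at hderiv
  · rw [norm_smul]
    gcongr
    exact norm_cpow_ofReal_sub_smul_le (by linarith) hδ.le hδε (le_of_lt hw) hy _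
  · simpa only [mul_smul] using
      (hasDerivAt_cpow_ofReal_sub (hw.trans (hδε.trans_le hy)) a).smul_const (φ y)

theorem differentiableOn_stieltjesTransform (hε : 0 < ε) (ha : 0 ≤ a) (hμ : ∀ᵐ y ∂μ, ε ≤ y)
    (hφ : Integrable (fun y => y ^ (-a) • φ y) μ) :
    DifferentiableOn ℂ (stieltjesTransform μ a φ) {z | z.re < ε} := fun _ hz =>
  (hasDerivAt_stieltjesTransform hε ha hμ hφ hz).differentiableAt.differentiableWithinAt

theorem norm_stieltjesTransform_le (hε : 0 < ε) (ha : 0 ≤ a) (hμ : ∀ᵐ y ∂μ, ε ≤ y)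
    (hφ : Integrable (fun y => y ^ (-a) • φ y) μ) (hz : z.re ≤ 0) :
    ‖stieltjesTransform μ a φ z‖ ≤ ∫ y, ‖y ^ (-a) • φ y‖ ∂μ :=
  norm_integral_le_of_norm_le hφ.norm (hμ.mono fun y hy => by
    simpa using norm_cpow_ofReal_sub_smul_le ha le_rfl hε hz hy (φ y))

theorem stieltjesTransform_ofReal (hμ : ∀ᵐ y ∂μ, ε ≤ y) {x : ℝ} (hx : x ≤ ε) (a : ℝ)
    (φ : ℝ → E) : stieltjesTransform μ a φ x = ∫ y, (y - x) ^ (-a) • φ y ∂μ :=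
  integral_congr_ae (hμ.mono fun y hy => by
    simp only
    rw [cpow_ofReal_sub_ofReal (hx.trans hy), Complex.coe_smul])

theorem stieltjesTransform_add_one_eq_zero (hε : 0 < ε) (ha : 0 < a) (hμ : ∀ᵐ y ∂μ, ε ≤ y)
    (hφ : Integrable (fun y => y ^ (-a) • φ y) μ) {C : E}
    (hC : ∀ z : ℂ, z.re < ε → stieltjesTransform μ a φ z = C) (hz : z.re < ε) :
    stieltjesTransform μ (a + 1) φ z = 0 := by
  have hconst : HasDerivAt (stieltjesTransform μ a φ) 0 z :=
    (hasDerivAt_const z C).congr_of_eventuallyEq <|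
      ((isOpen_lt Complex.continuous_re continuous_const).eventually_mem hz).mono hC
  have hzero := (hasDerivAt_stieltjesTransform hε ha.le hμ hφ hz).unique hconst
  exact (smul_eq_zero.1 hzero).resolve_left (Complex.ofReal_ne_zero.2 ha.ne')

theorem stieltjesTransform_add_nat_eq_zero (hε : 0 < ε) (ha : 0 < a) (hμ : ∀ᵐ y ∂μ, ε ≤ y)
    (hφ : Integrable (fun y => y ^ (-a) • φ y) μ)
    (h0 : ∀ z : ℂ, z.re < ε → stieltjesTransform μ a φ z = 0) (n : ℕ) :
    ∀ z : ℂ, z.re < ε → stieltjesTransform μ (a + n) φ z = 0 := by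
  induction n with
  | zero => simpa using h0
  | succ n ih =>
    intro z hz
    have ha' : a ≤ a + n := le_add_of_nonneg_right n.cast_nonneg
    simpa [add_assoc] using stieltjesTransform_add_one_eq_zero hε (ha.trans_le ha') hμ
      (integrable_rpow_smul_of_le hε hμ ha' hφ) ih hz

theorem ae_eq_zero_of_stieltjesTransform_eq_zero [CompleteSpace E] (hε : 0 < ε) (ha : 0 < a)
    (hμ : ∀ᵐ y ∂μ, ε ≤ y) (hφ : Integrable (fun y => y ^ (-a) • φ y) μ)
    (h0 : ∀ z : ℂ, z.re < ε → stieltjesTransform μ a φ z = 0) : φ =ᵐ[μ] 0 := by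
  have hmom (n : ℕ) : ∫ y, y⁻¹ ^ n • y ^ (-a) • φ y ∂μ = 0 := by
    rw [← stieltjesTransform_add_nat_eq_zero hε ha hμ hφ h0 n (0 : ℝ) (by simpa using hε),
      stieltjesTransform_ofReal hμ hε.le]
    refine integral_congr_ae (hμ.mono fun y hy => ?_)
    have hy0 : 0 < y := hε.trans_le hy
    simp only
    rw [smul_smul, sub_zero, neg_add, Real.rpow_add hy0, Real.rpow_neg hy0.le n,
      Real.rpow_natCast, inv_pow, mul_comm]
  filter_upwards [ae_eq_zero_of_integral_inv_pow_smul_eq_zero hε hμ hφ hmom, hμ] with y hy hεy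
  exact (smul_eq_zero.1 hy).resolve_left (Real.rpow_pos_of_pos (hε.trans_le hεy) _).ne'

theorem ae_eq_zero_of_stieltjesTransform_eq_const [CompleteSpace E] (hε : 0 < ε) (ha : 0 < a)
    (hμ : ∀ᵐ y ∂μ, ε ≤ y) (hφ : Integrable (fun y => y ^ (-a) • φ y) μ) {C : E}
    (hC : ∀ z : ℂ, z.re < ε → stieltjesTransform μ a φ z = C) : φ =ᵐ[μ] 0 :=
  ae_eq_zero_of_stieltjesTransform_eq_zero hε (by linarith) hμ
    (integrable_rpow_smul_of_le hε hμ (lt_add_one a).le hφ)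
    fun _ hz => stieltjesTransform_add_one_eq_zero hε ha hμ hφ hC hz

theorem ae_eq_zero_of_frequently_stieltjesTransform_add_eq_zero [CompleteSpace E] (hε : 0 < ε)
    (ha : 0 < a) (hb : 0 < b) (hμ : ∀ᵐ y ∂μ, ε ≤ y) (hν : ∀ᵐ y ∂ν, ε ≤ y)
    (hφ : Integrable (fun y => y ^ (-a) • φ y) μ) (hψ : Integrable (fun y => y ^ (-b) • ψ y) ν)
    (h : ∃ᶠ x : ℝ in 𝓝[≠] 0,
      stieltjesTransform μ a φ x + stieltjesTransform ν b ψ (-x : ℝ) = 0) :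
    φ =ᵐ[μ] 0 ∧ ψ =ᵐ[ν] 0 := by
  have hofReal : Tendsto ((↑) : ℝ → ℂ) (𝓝[≠] 0) (𝓝[≠] 0) := by
    simpa using! Complex.ofRealCLM.hasDerivAt.tendsto_nhdsNE (x := 0) (by simp)
  have hmaps : MapsTo Neg.neg {z : ℂ | -ε < z.re} {z | z.re < ε} := fun z hz => by
    simpa using neg_lt.1 hz
  obtain ⟨C, hCφ, hCψ⟩ := exists_eq_const_of_frequently_eq_of_halfPlanes hε
    (g := fun z => -stieltjesTransform ν b ψ (-z))
    (differentiableOn_stieltjesTransform hε ha.le hμ hφ)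
    ((differentiableOn_stieltjesTransform hε hb.le hν hψ).comp differentiableOn_id.neg hmaps).neg
    (fun z hz => norm_stieltjesTransform_le hε ha.le hμ hφ hz)
    (fun z hz => by
      rw [norm_neg]
      exact norm_stieltjesTransform_le hε hb.le hν hψ (by simpa using hz))
    (hofReal.frequently (h.mono fun x hx => by simpa using eq_neg_of_add_eq_zero_left hx))
  refine ⟨ae_eq_zero_of_stieltjesTransform_eq_const hε ha hμ hφ hCφ,
    ae_eq_zero_of_stieltjesTransform_eq_const (C := -C) hε hb hν hψ fun z hz => ?_⟩
  simpa [neg_eq_iff_eq_neg] using hCψ (-z) (by simpa using hz)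

end StieltjesTransform

section Reflection

variable {E : Type*} [NormedAddCommGroup E] {f : ℝ → E} {ε : ℝ}

theorem ae_eq_zero_of_ae_restrict_Ioi (hf : ∀ᵐ y, |y| ≤ ε → f y = 0)
    (hpos : ∀ᵐ y ∂volume.restrict (Ioi ε), f y = 0)
    (hneg : ∀ᵐ y ∂volume.restrict (Ioi ε), f (-y) = 0) : f =ᵐ[volume] 0 := by
  rw [ae_restrict_iff' measurableSet_Ioi] at hpos hneg
  filter_upwards [hf, hpos, (Measure.measurePreserving_neg volume).quasiMeasurePreserving.ae hneg]
    with y hy hypos hyneg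
  rcases le_or_gt |y| ε with h | h
  · exact hy h
  · exact (lt_abs.1 h).elim hypos fun h => by simpa using hyneg h

theorem ae_eq_zero_of_notMem_Ioi_union_Iio (hf : ∀ᵐ y, |y| ≤ ε → f y = 0) :
    ∀ᵐ y, y ∉ Ioi ε ∪ Iio (-ε) → f y = 0 :=
  hf.mono fun y hy h => hy <| by
    simp only [mem_union, mem_Ioi, mem_Iio, not_or, not_lt] at h
    exact abs_le.2 h.symm

theorem integrable_of_integrableOn_Ioi_comp_neg (hf : ∀ᵐ y, |y| ≤ ε → f y = 0)
    (hpos : IntegrableOn f (Ioi ε)) (hneg : IntegrableOn (fun y => f (-y)) (Ioi ε)) :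
    Integrable f :=
  (hpos.union (by simpa using hneg.comp_neg)).integrable_of_ae_notMem_eq_zero
    (ae_eq_zero_of_notMem_Ioi_union_Iio hf)

theorem integral_eq_setIntegral_Ioi_add_comp_neg [NormedSpace ℝ E] (hε : 0 ≤ ε)
    (hf : ∀ᵐ y, |y| ≤ ε → f y = 0) (hint : Integrable f) :
    ∫ y, f y = (∫ y in Ioi ε, f y) + ∫ y in Ioi ε, f (-y) := by
  rw [← setIntegral_eq_integral_of_ae_compl_eq_zero (ae_eq_zero_of_notMem_Ioi_union_Iio hf),
    setIntegral_union (Iio_disjoint_Ioi_of_le (neg_le_self hε)).symm measurableSet_Iio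
      hint.integrableOn hint.integrableOn,
    integral_comp_neg_Ioi, integral_Iic_eq_integral_Iio]

end Reflection

section OneSidedKernel

variable {E : Type*} [NormedAddCommGroup E] [NormedSpace ℝ E] {k : ℝ → ℝ} {φ : ℝ → E}
  {a c ε x : ℝ}

theorem integrable_rpow_sub_smul {μ : Measure ℝ} (hε : 0 < ε) (ha : 0 ≤ a)
    (hμ : ∀ᵐ y ∂μ, ε ≤ y) (hφ : Integrable (fun y => y ^ (-a) • φ y) μ) (hx : x < ε) :
    Integrable (fun y => (y - x) ^ (-a) • φ y) μ := by
  have hφm := aestronglyMeasurable_of_rpow_smul hε hμ hφ.aestronglyMeasurable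
  refine Integrable.mono' (hφ.norm.const_mul ((1 - max x 0 / ε) ^ (-a)))
    ((Measurable.aestronglyMeasurable (by fun_prop)).smul hφm) (hμ.mono fun y hy => ?_)
  rw [norm_smul, norm_smul, Real.norm_of_nonneg (Real.rpow_nonneg (hε.le.trans hy) _),
    ← mul_assoc, ← Complex.norm_real, ← cpow_ofReal_sub_ofReal (hx.le.trans hy)]
  gcongr
  exact norm_cpow_ofReal_sub_le ha (le_max_right _ _) (max_lt hx hε) (le_max_left _ _) hy

theorem ae_restrict_Ioi_le (ε : ℝ) : ∀ᵐ y ∂volume.restrict (Ioi ε), ε ≤ y :=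
  (ae_restrict_mem measurableSet_Ioi).mono fun _ hy => le_of_lt hy

theorem ae_kernel_smul_eq_rpow_smul (hk : ∀ w, 0 < w → k w = c * w ^ (-a))
    (hx : x ≤ ε) (φ : ℝ → E) : (fun y => k (y - x) • φ y) =ᵐ[volume.restrict (Ioi ε)]
      fun y => (y - x) ^ (-a) • (c • φ) y :=
  (ae_restrict_mem measurableSet_Ioi).mono fun y hy => by
    simp only [hk _ (sub_pos.2 (hx.trans_lt hy)), Pi.smul_apply, mul_smul]
    rw [smul_comm]

theorem integrable_rpow_smul_of_kernel (hk : ∀ w, 0 < w → k w = c * w ^ (-a))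
    (hε : 0 ≤ ε) (hφ : IntegrableOn (fun y => k y • φ y) (Ioi ε)) :
    IntegrableOn (fun y => y ^ (-a) • (c • φ) y) (Ioi ε) := by
  have hcongr := ae_kernel_smul_eq_rpow_smul hk hε φ
  simp only [sub_zero] at hcongr
  exact Integrable.congr hφ hcongr

theorem integrableOn_kernel_smul_of_norm_le (hk : ∀ w, 0 < w → k w = c * w ^ (-a))
    (ha : 1 < a) (hε : 0 < ε) {M : ℝ} (hφ : AEStronglyMeasurable φ)
    (hM : ∀ y, ‖φ y‖ ≤ M) : IntegrableOn (fun y => k y • φ y) (Ioi ε) := by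
  have hpow : IntegrableOn (fun y => c * y ^ (-a)) (Ioi ε) :=
    (integrableOn_Ioi_rpow_of_lt (neg_lt_neg ha) hε).const_mul c
  refine (hpow.smul_bdd M hφ.restrict (ae_of_all _ hM)).congr
    ((ae_restrict_mem measurableSet_Ioi).mono fun y hy => ?_)
  simp only [Pi.smul_apply', hk y (hε.trans hy)]

theorem integrableOn_kernel_sub_smul (hk : ∀ w, 0 < w → k w = c * w ^ (-a)) (hε : 0 < ε)
    (ha : 0 ≤ a) (hφ : IntegrableOn (fun y => k y • φ y) (Ioi ε)) (hx : x < ε) :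
    IntegrableOn (fun y => k (y - x) • φ y) (Ioi ε) :=
  (integrable_rpow_sub_smul hε ha (ae_restrict_Ioi_le ε)
    (integrable_rpow_smul_of_kernel hk hε.le hφ) hx).congr
    (ae_kernel_smul_eq_rpow_smul hk hx.le φ).symm

theorem setIntegral_kernel_sub_smul {E : Type*} [NormedAddCommGroup E] [NormedSpace ℂ E]
    (hk : ∀ w, 0 < w → k w = c * w ^ (-a)) (hx : x ≤ ε) (φ : ℝ → E) :
    ∫ y in Ioi ε, k (y - x) • φ y =
      stieltjesTransform (volume.restrict (Ioi ε)) a (c • φ) x := by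
  rw [stieltjesTransform_ofReal (ae_restrict_Ioi_le ε) hx]
  exact integral_congr_ae (ae_kernel_smul_eq_rpow_smul hk hx φ)

end OneSidedKernel

section UniqueContinuation

variable {E : Type*} [NormedAddCommGroup E] {k : ℝ → ℝ} {φ : ℝ → E} {a b c₁ c₂ ε x : ℝ}

theorem integrable_kernel_smul_of_norm_le [NormedSpace ℝ E]
    (hkpos : ∀ w, 0 < w → k w = c₂ * w ^ (-a)) (hkneg : ∀ w, 0 < w → k (-w) = c₁ * w ^ (-b))
    (ha : 1 < a) (hb : 1 < b) (hε : 0 < ε) {M : ℝ} (hφ : AEStronglyMeasurable φ)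
    (hM : ∀ y, ‖φ y‖ ≤ M) (hvan : ∀ᵐ y, |y| ≤ ε → φ y = 0) :
    Integrable fun y => k y • φ y :=
  integrable_of_integrableOn_Ioi_comp_neg
    (hvan.mono fun y hy h => by rw [hy h, smul_zero])
    (integrableOn_kernel_smul_of_norm_le hkpos ha hε hφ hM)
    (integrableOn_kernel_smul_of_norm_le (k := fun w => k (-w)) hkneg hb hε
      (hφ.comp_measurePreserving (Measure.measurePreserving_neg volume)) fun y => hM (-y))

theorem neg_sub_eq_neg_sub_neg {G : Type*} [AddCommGroup G] (x y : G) : -y - x = -(y - -x) := by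
  abel

theorem integrable_kernel_sub_smul [NormedSpace ℝ E]
    (hkpos : ∀ w, 0 < w → k w = c₂ * w ^ (-a)) (hkneg : ∀ w, 0 < w → k (-w) = c₁ * w ^ (-b))
    (ha : 0 ≤ a) (hb : 0 ≤ b) (hint : Integrable fun y => k y • φ y)
    (hvan : ∀ᵐ y, |y| ≤ ε → φ y = 0) (hx : |x| < ε) :
    Integrable fun y => k (y - x) • φ y := by
  have hε : 0 < ε := (abs_nonneg x).trans_lt hx
  refine integrable_of_integrableOn_Ioi_comp_neg
    (hvan.mono fun y hy h => by rw [hy h, smul_zero])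
    (integrableOn_kernel_sub_smul hkpos hε ha hint.integrableOn (lt_of_abs_lt hx)) ?_
  simp only [neg_sub_eq_neg_sub_neg x]
  exact integrableOn_kernel_sub_smul (k := fun w => k (-w)) hkneg hε hb
    hint.comp_neg.integrableOn ((neg_le_abs x).trans_lt hx)

theorem integral_kernel_sub_smul_eq_stieltjesTransform_add [NormedSpace ℂ E]
    (hkpos : ∀ w, 0 < w → k w = c₂ * w ^ (-a)) (hkneg : ∀ w, 0 < w → k (-w) = c₁ * w ^ (-b))
    (ha : 0 ≤ a) (hb : 0 ≤ b) (hint : Integrable fun y => k y • φ y)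
    (hvan : ∀ᵐ y, |y| ≤ ε → φ y = 0) (hx : |x| < ε) :
    ∫ y, k (y - x) • φ y = stieltjesTransform (volume.restrict (Ioi ε)) a (c₂ • φ) x +
      stieltjesTransform (volume.restrict (Ioi ε)) b (c₁ • fun y => φ (-y)) (-x : ℝ) := by
  rw [integral_eq_setIntegral_Ioi_add_comp_neg ((abs_nonneg x).trans hx.le)
    (hvan.mono fun y hy h => by rw [hy h, smul_zero])
    (integrable_kernel_sub_smul hkpos hkneg ha hb hint hvan hx)]
  simp only [neg_sub_eq_neg_sub_neg x]
  rw [setIntegral_kernel_sub_smul hkpos (lt_of_abs_lt hx).le,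
    setIntegral_kernel_sub_smul (k := fun w => k (-w)) hkneg ((neg_le_abs x).trans hx.le)]

theorem eventually_nhdsNE_zero_abs_lt (hε : 0 < ε) : ∀ᶠ x in 𝓝[≠] (0 : ℝ), |x| < ε :=
  nhdsWithin_le_nhds (continuous_abs.continuousAt.eventually_lt_const (by simpa using hε))

theorem ae_eq_zero_of_frequently_integral_kernel_sub_smul_eq_zero [NormedSpace ℂ E]
    [CompleteSpace E] (hkpos : ∀ w, 0 < w → k w = c₂ * w ^ (-a))
    (hkneg : ∀ w, 0 < w → k (-w) = c₁ * w ^ (-b)) (ha : 0 < a) (hb : 0 < b) (hc₁ : c₁ ≠ 0)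
    (hc₂ : c₂ ≠ 0) (hε : 0 < ε) (hint : Integrable fun y => k y • φ y)
    (hvan : ∀ᵐ y, |y| ≤ ε → φ y = 0)
    (hker : ∃ᶠ x in 𝓝[≠] (0 : ℝ), ∫ y, k (y - x) • φ y = 0) : φ =ᵐ[volume] 0 := by
  obtain ⟨hpos, hneg⟩ := ae_eq_zero_of_frequently_stieltjesTransform_add_eq_zero hε ha hb
    (ae_restrict_Ioi_le ε) (ae_restrict_Ioi_le ε)
    (integrable_rpow_smul_of_kernel hkpos hε.le hint.integrableOn)
    (integrable_rpow_smul_of_kernel (k := fun w => k (-w)) hkneg hε.le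
      hint.comp_neg.integrableOn)
    ((hker.and_eventually (eventually_nhdsNE_zero_abs_lt hε)).mono fun x ⟨hx, hxε⟩ => by
      rwa [← integral_kernel_sub_smul_eq_stieltjesTransform_add hkpos hkneg ha.le hb.le hint
        hvan hxε])
  exact ae_eq_zero_of_ae_restrict_Ioi hvan
    (hpos.mono fun _ hy => (smul_eq_zero_iff_right hc₂).1 hy)
    (hneg.mono fun _ hy => (smul_eq_zero_iff_right hc₁).1 hy)

theorem kernel_ne_zero (hkpos : ∀ w, 0 < w → k w = c₂ * w ^ (-a))
    (hkneg : ∀ w, 0 < w → k (-w) = c₁ * w ^ (-b)) (hc₁ : c₁ ≠ 0) (hc₂ : c₂ ≠ 0) (hx : x ≠ 0) :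
    k x ≠ 0 := by
  rcases hx.lt_or_gt with hx | hx
  · rw [← neg_neg x, hkneg _ (neg_pos.2 hx)]
    exact mul_ne_zero hc₁ (Real.rpow_pos_of_pos (neg_pos.2 hx) _).ne'
  · rw [hkpos x hx]
    exact mul_ne_zero hc₂ (Real.rpow_pos_of_pos hx _).ne'

theorem nonsymmetric_stable_ucp_dual_general [NormedSpace ℝ E] [CompleteSpace E]
    (hkpos : ∀ w, 0 < w → k w = c₂ * w ^ (-a)) (hkneg : ∀ w, 0 < w → k (-w) = c₁ * w ^ (-b))
    (ha : 0 < a) (hb : 0 < b) (hc₁ : c₁ ≠ 0) (hc₂ : c₂ ≠ 0) (hε : 0 < ε)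
    (hint : Integrable fun y => k y • φ y) (hvan : ∀ᵐ y, |y| ≤ ε → φ y = 0)
    (hker : ∃ᶠ x in 𝓝[≠] (0 : ℝ), ∫ y, k (y - x) • φ y = 0) : φ =ᵐ[volume] 0 := by
  have hdual (ℓ : StrongDual ℝ E) : ∀ᵐ y, ℓ (φ y) = 0 := by
    let L : E →L[ℝ] ℂ := Complex.ofRealCLM ∘L ℓ
    have hL : (fun y => L (φ y)) =ᵐ[volume] 0 :=
      ae_eq_zero_of_frequently_integral_kernel_sub_smul_eq_zero hkpos hkneg ha hb hc₁ hc₂ hε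
        (by simpa only [map_smul] using L.integrable_comp hint)
        (hvan.mono fun y hy h => by rw [hy h, map_zero])
        ((hker.and_eventually (eventually_nhdsNE_zero_abs_lt hε)).mono fun x ⟨hx, hxε⟩ => by
          simp only [← map_smul]
          rw [L.integral_comp_comm
            (integrable_kernel_sub_smul hkpos hkneg ha.le hb.le hint hvan hxε), hx, map_zero])
    exact hL.mono fun y hy => Complex.ofReal_eq_zero.1 hy
  obtain ⟨t, ht, hmem⟩ := hint.aestronglyMeasurable.isSeparable_ae_range
  have hkφ : (fun y => k y • φ y) =ᵐ[volume] 0 :=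
    ae_eq_zero_of_forall_dual_of_isSeparable ℝ ht
      (fun ℓ => (hdual ℓ).mono fun y hy => by simp [hy]) hmem
  filter_upwards [hkφ, Measure.ae_ne volume 0] with y hy hy0
  exact (smul_eq_zero_iff_right (kernel_ne_zero hkpos hkneg hc₁ hc₂ hy0)).1 hy

end UniqueContinuation

/-- Unique continuation (dual form) for one-dimensional, possibly non-symmetric
stable-type Lévy operators, with kernel `k(w) = c₁|w|^{-(1+2r)}` for `w < 0` and
`k(w) = c₂|w|^{-(1+2s)}` for `w > 0`. -/
theorem nonsymmetric_stable_ucp_dual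
    (r s : ℝ) (hr : r ∈ Set.Ioo (0 : ℝ) 1) (hs : s ∈ Set.Ioo (0 : ℝ) 1)
    (c₁ c₂ : ℝ) (hc₁ : 0 < c₁) (hc₂ : 0 < c₂)
    (ε : ℝ) (hε : 0 < ε)
    (k : ℝ → ℝ)
    (hk : ∀ w : ℝ, w ≠ 0 →
      k w = if w < 0 then c₁ * |w| ^ (-(1 + 2 * r)) else c₂ * |w| ^ (-(1 + 2 * s)))
    (φ : ℝ → ℝ)
    (hcont : Continuous φ)
    (hinf : Tendsto φ (cocompact ℝ) (nhds 0))
    (hvan : ∀ y : ℝ, |y| ≤ ε → φ y = 0)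
    (hker : ∀ x : ℝ, |x| < ε → ∫ y : ℝ, φ y * k (y - x) = 0) :
    φ = 0 := by
  have hkpos (w : ℝ) (hw : 0 < w) : k w = c₂ * w ^ (-(1 + 2 * s)) := by
    rw [hk w hw.ne', if_neg hw.le.not_gt, abs_of_pos hw]
  have hkneg (w : ℝ) (hw : 0 < w) : k (-w) = c₁ * w ^ (-(1 + 2 * r)) := by
    rw [hk _ (neg_ne_zero.2 hw.ne'), if_pos (neg_lt_zero.2 hw), abs_neg, abs_of_pos hw]
  have ha : 1 < 1 + 2 * s := by linarith [hs.1]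
  have hb : 1 < 1 + 2 * r := by linarith [hr.1]
  let Φ : ZeroAtInftyContinuousMap ℝ ℝ := ⟨⟨φ, hcont⟩, hinf⟩
  have hint : Integrable fun y => k y • φ y :=
    integrable_kernel_smul_of_norm_le hkpos hkneg ha hb hε hcont.aestronglyMeasurable
      Φ.toBCF.norm_coe_le_norm (ae_of_all _ hvan)
  refine (hcont.ae_eq_iff_eq volume continuous_zero).1 ?_
  refine nonsymmetric_stable_ucp_dual_general hkpos hkneg (zero_lt_one.trans ha)
    (zero_lt_one.trans hb) hc₁.ne' hc₂.ne' hε hint (ae_of_all _ hvan)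
    (Eventually.frequently ?_)
  filter_upwards [eventually_nhdsNE_zero_abs_lt hε] with x hx
  simpa only [smul_eq_mul, mul_comm] using hker x hx
end

section
/- Let β ≥ 0 and let ρ be a measure on (0,∞) with ∫_{(0,∞)} min(t,1) ρ(dt) < ∞. Define the Bernstein function f : (0,∞) → [0,∞) by f(λ) = βλ + ∫_{(0,∞)} (1 − e^{−λt}) ρ(dt), and let α > 0. Then the following are equivalent: (b) ∫_{(1,∞)} e^{αt} ρ(dt) < ∞; (d) there exists a function g : (−α,∞) → ℝ that is real-analytic on (−α,∞), agrees with f on (0,∞), and has a finite limit as x → −α⁺ (i.e. g extends continuously to [−α,∞)). -/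
open MeasureTheory

/-!
Splitting the jumps at size `1` writes `f` as a function analytic near `[-α, ∞)` minus the Laplace
transform `x ↦ ∫ e^{-xt} μ(dt)` of the finite measure `μ = ρ|_(1,∞)`, so the question is how far to
the left the latter continues analytically. Since `μ` lives on the positive half-line, Landau's
argument applies: Taylor coefficients of the moment-generating function have a sign, so Tonelli
turns convergence of an analytic continuation's power series past the abscissa of convergence into
integrability of `e^{st}` there, which is absurd. Hence a continuation to `(-α, ∞)` is the Laplace
transform itself, and Fatou's lemma carries integrability to the end point `-α`.
-/

section LaplaceTransform

open ProbabilityTheory Set Filter Topology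
open scoped Nat NNReal ENNReal

variable {Ω : Type*} {m : MeasurableSpace Ω} {X : Ω → ℝ} {μ : Measure Ω}

theorem integrable_of_hasSum_of_summable_integral_norm {ι E : Type*} [Countable ι]
    [NormedAddCommGroup E] {F : ι → Ω → E} {f : Ω → E} (hF_int : ∀ i, Integrable (F i) μ)
    (hF_sum : Summable fun i ↦ ∫ ω, ‖F i ω‖ ∂μ) (hf : ∀ᵐ ω ∂μ, HasSum (F · ω) (f ω)) :
    Integrable f μ := by
  refine ⟨aestronglyMeasurable_of_tendsto_ae atTop
    (fun s : Finset ι ↦ Finset.aestronglyMeasurable_fun_sum s fun i _ ↦ (hF_int i).1) hf, ?_⟩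
  calc ∫⁻ ω, ‖f ω‖ₑ ∂μ
      ≤ ∫⁻ ω, ∑' i, ‖F i ω‖ₑ ∂μ := by
        refine lintegral_mono_ae ?_
        filter_upwards [hf] with ω hω
        exact hω.tsum_eq ▸ enorm_tsum_le_tsum_enorm
    _ = ∑' i, ENNReal.ofReal (∫ ω, ‖F i ω‖ ∂μ) := by
        rw [lintegral_tsum fun i ↦ (hF_int i).1.enorm]
        simp_rw [ofReal_integral_norm_eq_lintegral_enorm (hF_int _)]
    _ < ⊤ := by
        rw [← ENNReal.ofReal_tsum_of_nonneg (fun i ↦ by positivity) hF_sum]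
        exact ENNReal.ofReal_lt_top

theorem exists_eventually_hasFPowerSeriesOnBall {𝕜 E F : Type*} [NontriviallyNormedField 𝕜]
    [NormedAddCommGroup E] [NormedSpace 𝕜 E] [NormedAddCommGroup F] [NormedSpace 𝕜 F]
    [CompleteSpace F] {f : E → F} {x : E} (hf : AnalyticAt 𝕜 f x) :
    ∃ r : ℝ≥0, 0 < r ∧ ∀ᶠ y in 𝓝 x, ∃ p : FormalMultilinearSeries 𝕜 E F,
      HasFPowerSeriesOnBall f p y r := by
  obtain ⟨p, R, hp⟩ := hf
  obtain ⟨r, hr, hrR⟩ := ENNReal.lt_iff_exists_nnreal_btwn.1 (ENNReal.half_pos hp.r_pos.ne')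
  have hrrR : (r + r : ℝ≥0∞) ≤ R := ENNReal.add_halves R ▸ add_le_add hrR.le hrR.le
  refine ⟨r, ENNReal.coe_pos.1 hr, ?_⟩
  filter_upwards [Metric.ball_mem_nhds x (NNReal.coe_pos.2 (ENNReal.coe_pos.1 hr))] with y hy
  have hyx : (‖y - x‖₊ : ℝ≥0∞) ≤ r := by
    rw [mem_ball_iff_norm] at hy
    exact_mod_cast hy.le
  have hyR : (‖y - x‖₊ : ℝ≥0∞) < R :=
    hyx.trans_lt (hrR.trans_le ENNReal.half_le_self)
  have hr_le : (r : ℝ≥0∞) ≤ R - ‖y - x‖₊ :=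
    ENNReal.le_sub_of_add_le_right ENNReal.coe_ne_top ((add_le_add_right hyx _).trans hrrR)
  exact ⟨_, by simpa using (hp.changeOrigin hyR).mono hr hr_le⟩

theorem hasSum_pow_mul_exp_mul (c s x : ℝ) :
    HasSum (fun n : ℕ ↦ s ^ n * (x ^ n * Real.exp (c * x) / n !)) (Real.exp ((c + s) * x)) := by
  have h := (NormedSpace.expSeries_div_hasSum_exp (s * x)).mul_right (Real.exp (c * x))
  rw [← Real.exp_eq_exp_ℝ, ← Real.exp_add, ← add_mul, add_comm s c] at h
  exact h.congr_fun fun n ↦ by ring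

theorem isLowerSet_integrableExpSet (hX : 0 ≤ᵐ[μ] X) (hXm : AEMeasurable X μ) :
    IsLowerSet (integrableExpSet X μ) := by
  intro b s hsb hb
  refine Integrable.mono' hb (by fun_prop) ?_
  filter_upwards [hX] with ω hω
  rw [Real.norm_of_nonneg (Real.exp_pos _).le]
  exact Real.exp_le_exp.2 (mul_le_mul_of_nonneg_right hsb hω)

theorem Iic_zero_subset_integrableExpSet [IsFiniteMeasure μ] (hX : 0 ≤ᵐ[μ] X)
    (hXm : AEMeasurable X μ) : Iic 0 ⊆ integrableExpSet X μ :=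
  (isLowerSet_integrableExpSet hX hXm).Iic_subset (by simp [integrableExpSet])

theorem continuousOn_mgf_Icc {a b : ℝ} (ha : a ∈ integrableExpSet X μ)
    (hb : b ∈ integrableExpSet X μ) : ContinuousOn (mgf X μ) (Icc a b) := by
  refine continuousOn_of_dominated
    (bound := fun ω ↦ Real.exp (a * X ω) + Real.exp (b * X ω))
    (fun s hs ↦ (integrable_exp_mul_of_le_of_le ha hb hs.1 hs.2).1) (fun s hs ↦ ?_)
    (Integrable.add ha hb) (ae_of_all _ fun ω ↦ by fun_prop)
  refine ae_of_all _ fun ω ↦ ?_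
  rw [Real.norm_of_nonneg (Real.exp_pos _).le]
  rcases le_total 0 (X ω) with hω | hω
  · exact (Real.exp_le_exp.2 (mul_le_mul_of_nonneg_right hs.2 hω)).trans
      (le_add_of_nonneg_left (Real.exp_pos _).le)
  · exact (Real.exp_le_exp.2 (mul_le_mul_of_nonpos_right hs.1 hω)).trans
      (le_add_of_nonneg_right (Real.exp_pos _).le)

theorem mem_integrableExpSet_of_tendsto_mgf (hXm : AEMeasurable X μ) {l : Filter ℝ} [l.NeBot]
    [l.IsCountablyGenerated] {b L : ℝ} (hlb : l ≤ 𝓝 b) (hl : ∀ᶠ s in l, s ∈ integrableExpSet X μ)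
    (hL : Tendsto (mgf X μ) l (𝓝 L)) : b ∈ integrableExpSet X μ := by
  have hlim : Tendsto (fun s ↦ ∫⁻ ω, ENNReal.ofReal (Real.exp (s * X ω)) ∂μ) l
      (𝓝 (ENNReal.ofReal L)) := by
    refine (ENNReal.tendsto_ofReal hL).congr' ?_
    filter_upwards [hl] with s hs
    exact ofReal_integral_eq_lintegral_ofReal hs (ae_of_all _ fun ω ↦ (Real.exp_pos _).le)
  have hle : ∫⁻ ω, ENNReal.ofReal (Real.exp (b * X ω)) ∂μ ≤ ENNReal.ofReal L := calc
    ∫⁻ ω, ENNReal.ofReal (Real.exp (b * X ω)) ∂μ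
    _ = ∫⁻ ω, liminf (fun s ↦ ENNReal.ofReal (Real.exp (s * X ω))) l ∂μ := by
        refine lintegral_congr fun ω ↦ (Tendsto.liminf_eq ?_).symm
        have hcont : Continuous fun s ↦ Real.exp (s * X ω) := by fun_prop
        exact ((ENNReal.continuous_ofReal.comp hcont).tendsto b).mono_left hlb
    _ ≤ liminf (fun s ↦ ∫⁻ ω, ENNReal.ofReal (Real.exp (s * X ω)) ∂μ) l :=
        lintegral_liminf_le' fun s ↦ by fun_prop
    _ = ENNReal.ofReal L := hlim.liminf_eq
  exact (lintegral_ofReal_ne_top_iff_integrable (by fun_prop)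
    (ae_of_all _ fun ω ↦ (Real.exp_pos _).le)).1 (ne_top_of_le_ne_top ENNReal.ofReal_ne_top hle)

theorem add_mem_integrableExpSet_of_lt_radius (hX : 0 ≤ᵐ[μ] X) {c : ℝ}
    (hc : c ∈ interior (integrableExpSet X μ)) {p : FormalMultilinearSeries ℝ ℝ ℝ}
    (hp : HasFPowerSeriesAt (mgf X μ) p c) {s : ℝ≥0} (hs : (s : ℝ≥0∞) < p.radius) :
    c + s ∈ integrableExpSet X μ := by
  have hpc := hp.eq_formalMultilinearSeries (hasFPowerSeriesAt_mgf hc)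
  have hmoment_nonneg (n : ℕ) : 0 ≤ᵐ[μ] fun ω ↦ X ω ^ n * Real.exp (c * X ω) := by
    filter_upwards [hX] with ω hω using mul_nonneg (pow_nonneg hω n) (Real.exp_pos _).le
  have hint (n : ℕ) : Integrable (fun ω ↦ (s : ℝ) ^ n * (X ω ^ n * Real.exp (c * X ω) / n !)) μ :=
    ((integrable_pow_mul_exp_of_mem_interior_integrableExpSet hc n).div_const _).const_mul _
  refine integrable_of_hasSum_of_summable_integral_norm hint ?_
    (ae_of_all _ fun ω ↦ hasSum_pow_mul_exp_mul c s (X ω))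
  refine (p.summable_norm_mul_pow hs).congr fun n ↦ ?_
  calc ‖p n‖ * (s : ℝ) ^ n = s ^ n * ((∫ ω, X ω ^ n * Real.exp (c * X ω) ∂μ) / n !) := by
        rw [hpc, FormalMultilinearSeries.ofScalars_norm, Real.norm_of_nonneg, mul_comm]
        exact div_nonneg (integral_nonneg_of_ae (hmoment_nonneg n)) (by positivity)
    _ = ∫ ω, s ^ n * (X ω ^ n * Real.exp (c * X ω) / n !) ∂μ := by
        rw [integral_const_mul, integral_div]
    _ = ∫ ω, ‖s ^ n * (X ω ^ n * Real.exp (c * X ω) / n !)‖ ∂μ := by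
        refine integral_congr_ae ?_
        filter_upwards [hmoment_nonneg n] with ω hω
        rw [Real.norm_of_nonneg (mul_nonneg (by positivity) (div_nonneg hω (by positivity)))]

theorem exists_gt_mem_integrableExpSet_of_analyticAt (hX : 0 ≤ᵐ[μ] X) {G : ℝ → ℝ} {a : ℝ}
    (hG : AnalyticAt ℝ G a) (hI : Iio a ⊆ integrableExpSet X μ) (hE : EqOn G (mgf X μ) (Iio a)) :
    ∃ b > a, b ∈ integrableExpSet X μ := by
  obtain ⟨r, hr, hball⟩ := exists_eventually_hasFPowerSeriesOnBall hG
  have ha : a - r / 2 < a := sub_lt_self a (by positivity)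
  obtain ⟨c, ⟨p, hp⟩, hc⟩ :=
    ((hball.filter_mono nhdsWithin_le_nhds).and (Ioo_mem_nhdsLT ha)).exists
  have hGc : G =ᶠ[𝓝 c] mgf X μ := hE.eventuallyEq_of_mem (Iio_mem_nhds hc.2)
  have hs : ((r / 2 : ℝ≥0) : ℝ≥0∞) < p.radius :=
    (ENNReal.coe_lt_coe.2 (NNReal.half_lt_self hr.ne')).trans_le hp.r_le
  refine ⟨c + (r / 2 : ℝ≥0), ?_, add_mem_integrableExpSet_of_lt_radius hX
    (interior_maximal hI isOpen_Iio hc.2) (hp.hasFPowerSeriesAt.congr hGc) hs⟩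
  push_cast
  linarith [hc.1]

theorem eqOn_mgf_Iio_of_analyticOnNhd {G : ℝ → ℝ} {b c : ℝ} (hG : AnalyticOnNhd ℝ G (Iio b))
    (hI : Iio b ⊆ integrableExpSet X μ) (hcb : c < b) (hE : G =ᶠ[𝓝 c] mgf X μ) :
    EqOn G (mgf X μ) (Iio b) :=
  hG.eqOn_of_preconnected_of_eventuallyEq
    (analyticOnNhd_mgf.mono (interior_maximal hI isOpen_Iio)) isPreconnected_Iio hcb hE

theorem Iio_subset_integrableExpSet_of_analyticOnNhd (hX : 0 ≤ᵐ[μ] X) {G : ℝ → ℝ} {b c : ℝ}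
    (hG : AnalyticOnNhd ℝ G (Iio b)) (hc : c ∈ interior (integrableExpSet X μ))
    (hE : G =ᶠ[𝓝 c] mgf X μ) : Iio b ⊆ integrableExpSet X μ := by
  intro x hxb
  by_contra hx
  have hlower : IsLowerSet (integrableExpSet X μ) :=
    isLowerSet_integrableExpSet hX (aemeasurable_of_mem_interior_integrableExpSet hc)
  have hx_upper : x ∈ upperBounds (integrableExpSet X μ) :=
    fun s hs ↦ le_of_not_ge fun hxs ↦ hx (hlower hxs hs)
  have hne : (integrableExpSet X μ).Nonempty := ⟨c, interior_subset hc⟩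
  set σ := sSup (integrableExpSet X μ)
  have hσb : σ < b := (csSup_le hne hx_upper).trans_lt hxb
  have hIσ : Iio σ ⊆ integrableExpSet X μ := fun s hs ↦
    let ⟨_, ht, hst⟩ := exists_lt_of_lt_csSup hne hs
    hlower hst.le ht
  have hSσ : integrableExpSet X μ ⊆ Iic σ := fun _ hs ↦ le_csSup ⟨x, hx_upper⟩ hs
  have hcσ : c < σ := by simpa using interior_mono hSσ hc
  obtain ⟨d, hσd, hd⟩ := exists_gt_mem_integrableExpSet_of_analyticAt hX (hG σ hσb) hIσ
    (eqOn_mgf_Iio_of_analyticOnNhd (hG.mono (Iio_subset_Iio hσb.le)) hIσ hcσ hE)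
  exact (hSσ hd).not_gt hσd

/-- `HasAnalyticExtension f a`: the restriction of `f` to `(0, ∞)` continues to a real-analytic
function on `(a, ∞)` with a finite limit at `a⁺`. -/
def HasAnalyticExtension (f : ℝ → ℝ) (a : ℝ) : Prop :=
  ∃ g : ℝ → ℝ, AnalyticOnNhd ℝ g (Ioi a) ∧ (∀ x, 0 < x → g x = f x) ∧
    ∃ L, Tendsto g (𝓝[>] a) (𝓝 L)

theorem HasAnalyticExtension.of_eq_sub {f k H : ℝ → ℝ} {a : ℝ} (hf : HasAnalyticExtension f a)
    (hH : AnalyticOnNhd ℝ H (Ici a)) (hk : ∀ x, 0 < x → k x = H x - f x) :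
    HasAnalyticExtension k a := by
  obtain ⟨g, hg, hgf, L, hL⟩ := hf
  refine ⟨fun x ↦ H x - g x, (hH.mono Ioi_subset_Ici_self).sub hg, fun x hx ↦ ?_, H a - L, ?_⟩
  · simp only [hk x hx, hgf x hx]
  · exact ((hH a self_mem_Ici).continuousAt.tendsto.mono_left nhdsWithin_le_nhds).sub hL

theorem hasAnalyticExtension_mgf_neg (hX : 0 ≤ᵐ[μ] X) (hXm : AEMeasurable X μ) {α : ℝ}
    (hα : α ∈ integrableExpSet X μ) : HasAnalyticExtension (fun x ↦ mgf X μ (-x)) (-α) := by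
  have hlower := isLowerSet_integrableExpSet hX hXm
  have hI : Iio α ⊆ interior (integrableExpSet X μ) :=
    interior_maximal (Iio_subset_Iic_self.trans (hlower.Iic_subset hα)) isOpen_Iio
  refine ⟨fun x ↦ mgf X μ (-x), fun x hx ↦ ?_, fun x _ ↦ rfl, mgf X μ α, ?_⟩
  · exact (analyticAt_mgf (hI (mem_Iio.2 (neg_lt.1 hx)))).fun_comp analyticAt_id.neg
  · have hcont : ContinuousWithinAt (mgf X μ) (Icc (α - 1) α) α :=
      continuousOn_mgf_Icc (hlower (sub_one_lt α).le hα) hα α ⟨(sub_one_lt α).le, le_rfl⟩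
    have hleft : Tendsto (mgf X μ) (𝓝[<] α) (𝓝 (mgf X μ α)) :=
      hcont.tendsto.mono_left (nhdsWithin_le_iff.2 (Icc_mem_nhdsLT (sub_one_lt α)))
    exact hleft.comp tendsto_neg_nhdsGT_neg

theorem mem_integrableExpSet_of_hasAnalyticExtension_mgf_neg (hX : 0 ≤ᵐ[μ] X)
    (hI : Iio 0 ⊆ integrableExpSet X μ) {α : ℝ}
    (h : HasAnalyticExtension (fun x ↦ mgf X μ (-x)) (-α)) : α ∈ integrableExpSet X μ := by
  obtain ⟨g, hg, hgf, L, hL⟩ := h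
  have hG : AnalyticOnNhd ℝ (fun s ↦ g (-s)) (Iio α) := fun s hs ↦
    (hg (-s) (mem_Ioi.2 (neg_lt_neg hs))).fun_comp analyticAt_id.neg
  obtain ⟨c, hc⟩ := exists_lt (min 0 α)
  have hc0 : c < 0 := hc.trans_le (min_le_left _ _)
  have hcα : c < α := hc.trans_le (min_le_right _ _)
  have hcI : c ∈ interior (integrableExpSet X μ) := interior_maximal hI isOpen_Iio hc0
  have hE : (fun s ↦ g (-s)) =ᶠ[𝓝 c] mgf X μ := by
    filter_upwards [Iio_mem_nhds hc0] with s hs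
    simpa using hgf (-s) (neg_pos.2 hs)
  have hIα := Iio_subset_integrableExpSet_of_analyticOnNhd hX hG hcI hE
  have hlim : Tendsto (mgf X μ) (𝓝[<] α) (𝓝 L) :=
    (hL.comp tendsto_neg_nhdsLT).congr' <|
      (eqOn_mgf_Iio_of_analyticOnNhd hG hIα hcα hE).eventuallyEq_nhdsWithin
  exact mem_integrableExpSet_of_tendsto_mgf (aemeasurable_of_mem_interior_integrableExpSet hcI)
    nhdsWithin_le_nhds (eventually_mem_nhdsWithin.mono hIα) hlim

theorem hasAnalyticExtension_mgf_neg_iff [IsFiniteMeasure μ] (hX : 0 ≤ᵐ[μ] X)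
    (hXm : AEMeasurable X μ) {α : ℝ} :
    HasAnalyticExtension (fun x ↦ mgf X μ (-x)) (-α) ↔ α ∈ integrableExpSet X μ :=
  ⟨mem_integrableExpSet_of_hasAnalyticExtension_mgf_neg hX
    (Iio_subset_Iic_self.trans (Iic_zero_subset_integrableExpSet hX hXm)),
    hasAnalyticExtension_mgf_neg hX hXm⟩

theorem integrable_one_sub_cexp_neg_mul {C : ℝ} (hXC : ∀ᵐ ω ∂μ, |X ω| ≤ C) (hX : Integrable X μ)
    (z : ℂ) : Integrable (fun ω ↦ 1 - Complex.exp (-z * X ω)) μ := by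
  have hXm : AEMeasurable X μ := hX.aemeasurable
  refine (hX.abs.const_mul (‖z‖ * Real.exp (‖z‖ * C))).mono' (by fun_prop) ?_
  filter_upwards [hXC] with ω hω
  have hnorm : ‖-z * X ω‖ = ‖z‖ * |X ω| := by simp
  calc ‖1 - Complex.exp (-z * X ω)‖
      ≤ ‖-z * X ω‖ * Real.exp ‖-z * X ω‖ := by
        simpa [norm_sub_rev] using Complex.norm_exp_sub_sum_le_norm_mul_exp (-z * X ω) 1
    _ = ‖z‖ * |X ω| * Real.exp (‖z‖ * |X ω|) := by rw [hnorm]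
    _ ≤ ‖z‖ * |X ω| * Real.exp (‖z‖ * C) := by gcongr
    _ = ‖z‖ * Real.exp (‖z‖ * C) * |X ω| := by ring

theorem integrable_one_sub_exp_neg_mul {C : ℝ} (hXC : ∀ᵐ ω ∂μ, |X ω| ≤ C) (hX : Integrable X μ)
    (x : ℝ) : Integrable (fun ω ↦ 1 - Real.exp (-x * X ω)) μ := by
  refine (integrable_one_sub_cexp_neg_mul hXC hX x).re.congr (ae_of_all _ fun ω ↦ ?_)
  simp [← Complex.ofReal_neg, ← Complex.ofReal_mul, Complex.exp_ofReal_re]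

theorem differentiable_integral_one_sub_cexp_neg_mul {C : ℝ} (hXC : ∀ᵐ ω ∂μ, |X ω| ≤ C)
    (hX : Integrable X μ) :
    Differentiable ℂ fun z : ℂ ↦ ∫ ω, (1 - Complex.exp (-z * X ω)) ∂μ := by
  intro z
  have hXm : AEMeasurable X μ := hX.aemeasurable
  refine (hasDerivAt_integral_of_dominated_loc_of_deriv_le
    (F' := fun w ω ↦ X ω * Complex.exp (-w * X ω))
    (bound := fun ω ↦ Real.exp ((‖z‖ + 1) * C) * |X ω|) (Metric.ball_mem_nhds z one_pos)
    (Eventually.of_forall fun w ↦ by fun_prop) (integrable_one_sub_cexp_neg_mul hXC hX z)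
    (by fun_prop) ?_ (hX.abs.const_mul _) (ae_of_all _ fun ω w _ ↦ ?_)).2.differentiableAt
  · filter_upwards [hXC] with ω hω w hw
    have hwz : ‖w‖ ≤ ‖z‖ + 1 := by
      linarith [norm_le_norm_add_norm_sub' w z, mem_ball_iff_norm.1 hw]
    calc ‖X ω * Complex.exp (-w * X ω)‖
        ≤ |X ω| * Real.exp ‖-w * X ω‖ := by
          rw [norm_mul, Complex.norm_real, Real.norm_eq_abs]
          gcongr
          exact Complex.norm_exp_le_exp_norm _
      _ = Real.exp (‖w‖ * |X ω|) * |X ω| := by simp [mul_comm]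
      _ ≤ Real.exp ((‖z‖ + 1) * C) * |X ω| := by gcongr
  · convert! ((hasDerivAt_id w).neg.mul_const (X ω : ℂ)).cexp.const_sub 1 using 1
    simp only [neg_mul, Pi.neg_apply, id_eq, one_mul, mul_neg, neg_neg]
    ring

theorem analyticOnNhd_integral_one_sub_exp_neg_mul {C : ℝ} (hXC : ∀ᵐ ω ∂μ, |X ω| ≤ C)
    (hX : Integrable X μ) :
    AnalyticOnNhd ℝ (fun x : ℝ ↦ ∫ ω, (1 - Real.exp (-x * X ω)) ∂μ) univ := by
  intro x _
  convert! ((differentiable_integral_one_sub_cexp_neg_mul hXC hX).analyticAt x).re_ofReal using 1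
  ext y
  rw [← Complex.ofReal_re (∫ ω, (1 - Real.exp (-y * X ω)) ∂μ), ← integral_complex_ofReal]
  simp

section LevyMeasure

variable {ρ : Measure ℝ}

theorem integrableOn_min_one_of_lintegral_lt_top
    (hρ : ∫⁻ t in Ioi (0 : ℝ), ENNReal.ofReal (min t 1) ∂ρ < ⊤) :
    IntegrableOn (fun t ↦ min t 1) (Ioi 0) ρ := by
  refine (lintegral_ofReal_ne_top_iff_integrable (by fun_prop) ?_).1 hρ.ne
  filter_upwards [ae_restrict_mem measurableSet_Ioi] with t ht using le_min ht.le zero_le_one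

theorem integrableOn_id_Ioc_of_integrableOn_min_one
    (hρ : IntegrableOn (fun t ↦ min t 1) (Ioi 0) ρ) :
    IntegrableOn (fun t ↦ t) (Ioc 0 1) ρ :=
  (hρ.mono_set Ioc_subset_Ioi_self).congr_fun (fun _ ht ↦ min_eq_left ht.2) measurableSet_Ioc

theorem isFiniteMeasure_restrict_Ioi_of_integrableOn_min_one
    (hρ : IntegrableOn (fun t ↦ min t 1) (Ioi 0) ρ) : IsFiniteMeasure (ρ.restrict (Ioi 1)) := by
  have hone : IntegrableOn (fun _ ↦ (1 : ℝ)) (Ioi 1) ρ :=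
    (hρ.mono_set (Ioi_subset_Ioi zero_le_one)).congr_fun (fun _ ht ↦ min_eq_right ht.le)
      measurableSet_Ioi
  exact (integrable_const_iff_isFiniteMeasure one_ne_zero).1 hone

theorem ae_restrict_Ioc_abs_le_one : ∀ᵐ t ∂ρ.restrict (Ioc (0 : ℝ) 1), |t| ≤ 1 := by
  filter_upwards [ae_restrict_mem measurableSet_Ioc] with t ht
  rw [abs_of_pos ht.1]
  exact ht.2

theorem id_nonneg_ae_restrict_Ioi_one : 0 ≤ᵐ[ρ.restrict (Ioi 1)] (id : ℝ → ℝ) := by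
  filter_upwards [ae_restrict_mem measurableSet_Ioi] with t ht using zero_le_one.trans ht.le

theorem setIntegral_one_sub_exp_eq_sub_mgf (hρ : IntegrableOn (fun t ↦ min t 1) (Ioi 0) ρ)
    {x : ℝ} (hx : 0 ≤ x) :
    ∫ t in Ioi 0, (1 - Real.exp (-x * t)) ∂ρ =
      ∫ t in Ioc 0 1, (1 - Real.exp (-x * t)) ∂ρ + ρ.real (Ioi 1)
        - mgf id (ρ.restrict (Ioi 1)) (-x) := by
  have := isFiniteMeasure_restrict_Ioi_of_integrableOn_min_one hρ
  have hlarge : IntegrableOn (fun t ↦ Real.exp (-x * t)) (Ioi 1) ρ :=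
    Iic_zero_subset_integrableExpSet id_nonneg_ae_restrict_Ioi_one aemeasurable_id
      (neg_nonpos.2 hx)
  have hsmall : IntegrableOn (fun t ↦ 1 - Real.exp (-x * t)) (Ioc 0 1) ρ :=
    integrable_one_sub_exp_neg_mul ae_restrict_Ioc_abs_le_one
      (integrableOn_id_Ioc_of_integrableOn_min_one hρ) x
  rw [← Ioc_union_Ioi_eq_Ioi (zero_le_one' ℝ), setIntegral_union Ioc_disjoint_Ioi_same
    measurableSet_Ioi hsmall ((integrable_const _).sub hlarge),
    integral_sub (integrable_const _) hlarge]
  simp [mgf, add_sub_assoc]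

theorem bernstein_exponential_moment_iff_analytic_extension_general (ρ : Measure ℝ)
    (hρint : ∫⁻ t in Ioi (0 : ℝ), ENNReal.ofReal (min t 1) ∂ρ < ⊤) {α : ℝ} {d f : ℝ → ℝ}
    (hd : AnalyticOnNhd ℝ d (Ici (-α)))
    (hf : ∀ x, 0 < x → f x = d x + ∫ t in Ioi (0 : ℝ), (1 - Real.exp (-x * t)) ∂ρ) :
    (∫⁻ t in Ioi (1 : ℝ), ENNReal.ofReal (Real.exp (α * t)) ∂ρ < ⊤) ↔
      HasAnalyticExtension f (-α) := by
  have hρ := integrableOn_min_one_of_lintegral_lt_top hρint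
  have := isFiniteMeasure_restrict_Ioi_of_integrableOn_min_one hρ
  let H (x : ℝ) : ℝ := d x + ∫ t in Ioc 0 1, (1 - Real.exp (-x * t)) ∂ρ + ρ.real (Ioi 1)
  have hH : AnalyticOnNhd ℝ H (Ici (-α)) :=
    (hd.add ((analyticOnNhd_integral_one_sub_exp_neg_mul ae_restrict_Ioc_abs_le_one
      (integrableOn_id_Ioc_of_integrableOn_min_one hρ)).mono (subset_univ _))).add
      analyticOnNhd_const
  have hfH (x : ℝ) (hx : 0 < x) : f x = H x - mgf id (ρ.restrict (Ioi 1)) (-x) := by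
    rw [hf x hx, setIntegral_one_sub_exp_eq_sub_mgf hρ hx.le]
    ring
  have hmgf : HasAnalyticExtension (fun x ↦ mgf id (ρ.restrict (Ioi 1)) (-x)) (-α) ↔
      HasAnalyticExtension f (-α) :=
    ⟨fun h ↦ h.of_eq_sub hH hfH,
      fun h ↦ h.of_eq_sub hH fun x hx ↦ by rw [hfH x hx, sub_sub_cancel]⟩
  rw [← hmgf, hasAnalyticExtension_mgf_neg_iff id_nonneg_ae_restrict_Ioi_one aemeasurable_id,
    lt_top_iff_ne_top]
  exact lintegral_ofReal_ne_top_iff_integrable (by fun_prop)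
    (ae_of_all _ fun t ↦ (Real.exp_pos _).le)

end LevyMeasure

end LaplaceTransform

/-- Exponential moment characterization of real-analytic left extension of a Bernstein
function: `∫_{(1,∞)} e^{αt} ρ(dt) < ∞` iff `f` has a real-analytic extension onto `(-α, ∞)`
which is continuous up to `-α` (i.e. has a finite limit as `x → -α⁺`). -/
theorem bernstein_exponential_moment_iff_analytic_extension
    (β : ℝ) (hβ : 0 ≤ β)
    (ρ : Measure ℝ) (hρsupp : ρ (Set.Iic 0) = 0)
    (hρint : ∫⁻ t in Set.Ioi (0 : ℝ), ENNReal.ofReal (min t 1) ∂ρ < ⊤)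
    (f : ℝ → ℝ)
    (hf : ∀ lam : ℝ, 0 < lam →
      f lam = β * lam + ∫ t in Set.Ioi (0 : ℝ), (1 - Real.exp (-lam * t)) ∂ρ)
    (α : ℝ) (hα : 0 < α) :
    (∫⁻ t in Set.Ioi (1 : ℝ), ENNReal.ofReal (Real.exp (α * t)) ∂ρ < ⊤) ↔
    (∃ g : ℝ → ℝ,
      AnalyticOnNhd ℝ g (Set.Ioi (-α)) ∧
      (∀ lam : ℝ, 0 < lam → g lam = f lam) ∧
      ∃ L : ℝ, Filter.Tendsto g (nhdsWithin (-α) (Set.Ioi (-α))) (nhds L)) :=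
  bernstein_exponential_moment_iff_analytic_extension_general ρ hρint (d := fun x ↦ β * x)
    (fun _ _ ↦ by fun_prop) hf
end

section
/- Let n ≥ 1. Let p : ℤⁿ → [0,1] with p(0) = 0 and Σ_{ℓ∈ℤⁿ} p(ℓ) = 1, and assume the random walk is non-degenerate in the sense that the real linear span of {ℓ ∈ ℤⁿ : p(ℓ) > 0} is all of ℝⁿ. Let β ≥ 0 and let ρ be a measure on (0,∞) with ∫_{(0,∞)} min(t,1) ρ(dt) < ∞ which has no positive exponential moments: ∫_{(1,∞)} e^{αt} ρ(dt) = ∞ for every α > 0, and define f(z) = βz + ∫_{(0,∞)} (1 − e^{−zt}) ρ(dt) for z ∈ ℂ with Re z ≥ 0. Let ψ_R(ξ) = Σ_{ℓ∈ℤⁿ} p(ℓ)·(1 − e^{i ℓ·ξ}) for ξ ∈ ℝⁿ (note Re ψ_R(ξ) ≥ 0), and set ψ(ξ) = f(ψ_R(ξ)). If u, v : ℤⁿ → ℂ are finitely supported and Σ_{k∈ℤⁿ} v(k) e^{i k·ξ} = ψ(ξ) · Σ_{k∈ℤⁿ} u(k) e^{i k·ξ} for all ξ ∈ ℝⁿ,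 then u = 0. (Unique continuation for the subordinated discrete Lévy operator f(−A_R): if u and f(−A_R)u both vanish outside a bounded set, then u vanishes identically.) -/
open MeasureTheory

/-!
Restrict everything to a line `t ↦ t • η` whose direction has coordinates linearly independent over
`ℤ`. There `û` is an exponential sum with distinct frequencies, hence not identically zero near `0`
unless `u = 0`, and `ψ(tη)`, being continuous and the quotient `v̂ / û` of analytic functions, is
analytic at `t = 0`. Let `P` be the law of a step projected to this line. Expanding the exponential
in `f(1 - φ_P)`, where `φ_P` is the characteristic function of `P`, shows that `f(1) - ψ(tη)` is the
characteristic function of a finite measure on `ℝ`, namely the subordinated Lévy measure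
`β P + ∑ m ≥ 1, w_m P^{*m}` with mixed Poisson weights `w_m`.

If the characteristic function of a finite measure is analytic at `0`, then Fatou's lemma applied to
its symmetric second differences yields all even moments in turn, the Taylor coefficients bound
them, and so the measure has exponential moments of both signs. But `∫ e^{cx} P(dx) > 1` for `c` of
one of the two signs, and then the exponential moment `∑ m, w_m (∫ e^{cx} P(dx))^m` is infinite
because `ρ` has no positive exponential moment.
-/

open ProbabilityTheory Filter Topology Complex Set
open scoped ENNReal

theorem analyticAt_of_mul_eventuallyEq {𝕜 𝕜' : Type*} [NontriviallyNormedField 𝕜]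
    [NontriviallyNormedField 𝕜'] [NormedAlgebra 𝕜 𝕜'] {h U V : 𝕜 → 𝕜'} {x : 𝕜}
    (hh : ContinuousAt h x) (hU : AnalyticAt 𝕜 U x) (hV : AnalyticAt 𝕜 V x)
    (hU0 : ¬ U =ᶠ[𝓝 x] 0) (heq : h * U =ᶠ[𝓝 x] V) : AnalyticAt 𝕜 h x := by
  refine ((hV.meromorphicAt.div hU.meromorphicAt).congr ?_).analyticAt hh
  filter_upwards [heq.filter_mono nhdsWithin_le_nhds,
    hU.eventually_eq_zero_or_eventually_ne_zero.resolve_left hU0] with t ht hUt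
  exact (eq_div_of_mul_eq hUt ht).symm

theorem isBigO_symm_second_difference_of_analyticAt {E : Type*} [NormedAddCommGroup E]
    [NormedSpace ℝ E] {g : ℝ → E} (hg : AnalyticAt ℝ g 0) :
    (fun t : ℝ => g t + g (-t) - (2 : ℝ) • g 0) =O[𝓝 0] fun t : ℝ => t ^ 2 := by
  obtain ⟨q, hq⟩ := hg
  have hplus : (fun t : ℝ => g t - q.partialSum 2 t) =O[𝓝 0] fun t : ℝ => t ^ 2 := by
    simpa using hq.isBigO_sub_partialSum_pow 2
  have hminus : (fun t : ℝ => g (-t) - q.partialSum 2 (-t)) =O[𝓝 0] fun t : ℝ => t ^ 2 := by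
    have hneg : Tendsto (fun t : ℝ => -t) (𝓝 0) (𝓝 0) := by
      simpa using (continuous_neg (G := ℝ)).tendsto 0
    simpa [Function.comp_def] using hplus.comp_tendsto hneg
  refine (hplus.add hminus).congr_left fun t => ?_
  have hconst (s : ℝ) : q 0 (fun _ => s) = g 0 := hq.coeff_zero _
  have hodd : q 1 (fun _ => -t) = - q 1 (fun _ => t) := by simp
  simp only [FormalMultilinearSeries.partialSum, Finset.sum_range_succ, Finset.sum_range_zero,
    hconst, hodd, two_smul]
  abel

theorem tendsto_two_sub_two_cos_div_sq (y : ℝ) :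
    Tendsto (fun t : ℝ => (2 - 2 * Real.cos (t * y)) / t ^ 2) (𝓝[≠] 0) (𝓝 (y ^ 2)) := by
  have hderiv : HasDerivAt (fun t : ℝ => 2 * Real.sin (t * y / 2)) y 0 := by
    have hlin : HasDerivAt (fun t : ℝ => t * y / 2) (y / 2) 0 := by
      simpa using ((hasDerivAt_id (0 : ℝ)).mul_const y).div_const 2
    simpa [mul_div_cancel₀] using hlin.sin.const_mul 2
  refine ((hasDerivAt_iff_tendsto_slope.mp hderiv).pow 2).congr fun t => ?_
  have hcos : Real.cos (t * y) = 2 * Real.cos (t * y / 2) ^ 2 - 1 := by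
    rw [← Real.cos_two_mul, mul_div_cancel₀ _ two_ne_zero]
  simp only [slope_def_field, zero_mul, zero_div, Real.sin_zero, mul_zero, sub_zero]
  rw [div_pow, mul_pow, Real.sin_sq, hcos]
  ring

section Moments

variable {μ : Measure ℝ} [IsFiniteMeasure μ]

theorem integrable_two_sub_two_cos (t : ℝ) :
    Integrable (fun y => 2 - 2 * Real.cos (t * y)) μ :=
  .of_bound (by fun_prop) 4 <| ae_of_all _ fun y => by
    rw [Real.norm_eq_abs, abs_le]
    constructor <;> linarith [Real.cos_le_one (t * y), Real.neg_one_le_cos (t * y)]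

theorem charFun_symm_second_difference (t : ℝ) :
    charFun μ t + charFun μ (-t) - (2 : ℝ) • charFun μ 0
      = ((-∫ y, (2 - 2 * Real.cos (t * y)) ∂μ : ℝ) : ℂ) := by
  have hint : Integrable (fun y : ℝ => cexp (t * y * I)) μ :=
    .of_bound (by fun_prop) 1 <| ae_of_all _ fun y => by
      rw [← ofReal_mul, norm_exp_ofReal_mul_I]
  have hre : (charFun μ t).re = ∫ y, Real.cos (t * y) ∂μ := by
    rw [charFun_apply_real, ← RCLike.re_eq_complex_re, ← integral_re hint]
    refine integral_congr_ae (ae_of_all _ fun y => ?_)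
    simp only [RCLike.re_eq_complex_re, ← ofReal_mul, exp_ofReal_mul_I_re]
  have hcos : Integrable (fun y => 2 * Real.cos (t * y)) μ := by
    simpa [Pi.sub_def] using (integrable_const 2).sub (integrable_two_sub_two_cos (μ := μ) t)
  rw [charFun_neg, add_conj, charFun_zero, hre, integral_sub (integrable_const 2) hcos,
    integral_const_mul, integral_const, smul_eq_mul, real_smul]
  push_cast
  ring

theorem integrable_sq_of_charFun_symm_second_difference_isBigO
    (h : (fun t => charFun μ t + charFun μ (-t) - (2 : ℝ) • charFun μ 0) =O[𝓝 0]
      fun t : ℝ => t ^ 2) :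
    Integrable (fun y => y ^ 2) μ := by
  have hnonneg (t y : ℝ) : 0 ≤ (2 - 2 * Real.cos (t * y)) / t ^ 2 := by
    have := Real.cos_le_one (t * y)
    exact div_nonneg (by linarith) (sq_nonneg t)
  obtain ⟨C, hC⟩ := h.bound
  have hbound : ∀ᶠ t : ℝ in 𝓝[≠] 0,
      ∫⁻ y, ENNReal.ofReal ((2 - 2 * Real.cos (t * y)) / t ^ 2) ∂μ ≤ ENNReal.ofReal C := by
    filter_upwards [hC.filter_mono nhdsWithin_le_nhds, self_mem_nhdsWithin] with t ht ht0
    rw [← ofReal_integral_eq_lintegral_ofReal ((integrable_two_sub_two_cos t).div_const _)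
      (ae_of_all _ (hnonneg t)), integral_div]
    rw [charFun_symm_second_difference, norm_real, norm_neg, norm_pow, Real.norm_eq_abs t,
      sq_abs] at ht
    have ht2 : 0 < t ^ 2 := sq_pos_of_ne_zero ht0
    exact ENNReal.ofReal_le_ofReal
      ((div_le_iff₀ ht2).mpr ((Real.le_norm_self _).trans ht))
  refine ⟨by fun_prop, ?_⟩
  rw [hasFiniteIntegral_iff_ofReal (ae_of_all _ sq_nonneg)]
  calc ∫⁻ y, ENNReal.ofReal (y ^ 2) ∂μ
      = ∫⁻ y, liminf (fun t : ℝ => ENNReal.ofReal ((2 - 2 * Real.cos (t * y)) / t ^ 2))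
          (𝓝[≠] 0) ∂μ :=
        lintegral_congr fun y =>
          ((ENNReal.tendsto_ofReal (tendsto_two_sub_two_cos_div_sq y)).liminf_eq).symm
    _ ≤ liminf (fun t : ℝ => ∫⁻ y, ENNReal.ofReal ((2 - 2 * Real.cos (t * y)) / t ^ 2) ∂μ)
          (𝓝[≠] 0) := lintegral_liminf_le fun t => by fun_prop
    _ ≤ ENNReal.ofReal C := liminf_le_of_frequently_le' hbound.frequently
    _ < ⊤ := ENNReal.ofReal_lt_top

theorem memLp_id_two_mul_iff_integrable_pow (k : ℕ) :
    MemLp id (2 * k : ℕ) μ ↔ Integrable (fun y : ℝ => y ^ (2 * k)) μ := by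
  rcases eq_or_ne k 0 with rfl | hk
  · simpa using (by fun_prop)
  rw [← integrable_norm_rpow_iff (by fun_prop) (by simpa using hk) (ENNReal.natCast_ne_top _)]
  simp only [id_eq, Real.norm_eq_abs, ENNReal.toReal_natCast, Real.rpow_natCast,
    (even_two_mul k).pow_abs]

theorem charFun_withDensity_pow_two_mul {k : ℕ} (hk : MemLp id (2 * k : ℕ) μ) (t : ℝ) :
    charFun (μ.withDensity fun y => ENNReal.ofReal (y ^ (2 * k))) t
      = (-1) ^ k * iteratedDeriv (2 * k) (charFun μ) t := by
  have hnonneg (y : ℝ) : 0 ≤ y ^ (2 * k) := (even_two_mul k).pow_nonneg y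
  rw [iteratedDeriv_charFun hk, pow_mul, I_sq, ← mul_assoc, ← mul_pow, neg_one_mul, neg_neg,
    one_pow, one_mul, charFun_apply_real, integral_withDensity_eq_integral_toReal_smul
      (by fun_prop) (ae_of_all _ fun _ => ENNReal.ofReal_lt_top)]
  simp [ENNReal.toReal_ofReal (hnonneg _)]

theorem integrable_pow_two_mul_of_analyticAt_charFun (h : AnalyticAt ℝ (charFun μ) 0) (k : ℕ) :
    Integrable (fun y : ℝ => y ^ (2 * k)) μ := by
  induction k with
  | zero => simp
  | succ k ih =>
    have hk : MemLp id (2 * k : ℕ) μ := (memLp_id_two_mul_iff_integrable_pow k).mpr ih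
    have hnonneg (y : ℝ) : 0 ≤ y ^ (2 * k) := (even_two_mul k).pow_nonneg y
    have := isFiniteMeasure_withDensity_ofReal ih.hasFiniteIntegral
    have hderiv : AnalyticAt ℝ (iteratedDeriv (2 * k) (charFun μ)) 0 := by
      rw [iteratedDeriv_eq_iterate]
      exact h.iterated_deriv _
    have hsq := integrable_sq_of_charFun_symm_second_difference_isBigO <|
      isBigO_symm_second_difference_of_analyticAt <|
        (analyticAt_const.mul hderiv).congr <|
          .of_forall fun t => (charFun_withDensity_pow_two_mul hk t).symm
    rw [integrable_withDensity_iff (by fun_prop)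
      (ae_of_all _ fun _ => ENNReal.ofReal_lt_top)] at hsq
    simpa [ENNReal.toReal_ofReal (hnonneg _), ← pow_add, mul_add, add_comm] using hsq

theorem integral_pow_le_of_hasFPowerSeriesAt_charFun {q : FormalMultilinearSeries ℝ ℝ ℂ}
    (hq : HasFPowerSeriesAt (charFun μ) q 0) {k : ℕ} (hk : MemLp id k μ) :
    ∫ y, y ^ k ∂μ ≤ k.factorial * ‖q k‖ := by
  obtain ⟨R, hq⟩ := hq
  have hcoeff : k.factorial • q k (fun _ => (1 : ℝ)) = I ^ k * ∫ y, y ^ k ∂μ := by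
    rw [hq.factorial_smul 1 k, ← iteratedDeriv_eq_iteratedFDeriv, iteratedDeriv_charFun_zero hk]
  calc ∫ y, y ^ k ∂μ ≤ ‖I ^ k * (∫ y, y ^ k ∂μ : ℝ)‖ := by
        simp [le_abs_self]
    _ = k.factorial * ‖q k fun _ => (1 : ℝ)‖ := by
        rw [← hcoeff, nsmul_eq_mul, norm_mul, norm_natCast]
    _ ≤ k.factorial * ‖q k‖ := by
        gcongr
        simpa only [norm_one, Finset.prod_const_one, mul_one] using (q k).le_opNorm fun _ => (1 : ℝ)

theorem lintegral_ofReal_cosh (μ : Measure ℝ) (r : ℝ) :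
    ∫⁻ y, ENNReal.ofReal (Real.cosh (r * y)) ∂μ
      = ∑' k : ℕ, ∫⁻ y, ENNReal.ofReal ((r * y) ^ (2 * k) / (2 * k).factorial) ∂μ := by
  rw [← lintegral_tsum fun k => by fun_prop]
  refine lintegral_congr fun y => ?_
  have hsum := Real.hasSum_cosh (r * y)
  rw [← hsum.tsum_eq, ENNReal.ofReal_tsum_of_nonneg (fun k => ?_) hsum.summable]
  exact div_nonneg ((even_two_mul k).pow_nonneg _) (by positivity)

theorem exists_integrable_cosh_of_analyticAt_charFun (h : AnalyticAt ℝ (charFun μ) 0) :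
    ∃ r : ℝ, 0 < r ∧ Integrable (fun y => Real.cosh (r * y)) μ := by
  have hmoment := integrable_pow_two_mul_of_analyticAt_charFun h
  obtain ⟨q, hq⟩ := h
  obtain ⟨r, hr0, hr⟩ := ENNReal.lt_iff_exists_nnreal_btwn.mp hq.radius_pos
  have hsummable : Summable fun k : ℕ => ‖q (2 * k)‖ * (r : ℝ) ^ (2 * k) :=
    (q.summable_norm_mul_pow hr).comp_injective (mul_right_injective₀ two_ne_zero)
  have hterm (k : ℕ) :
      ∫⁻ y, ENNReal.ofReal ((r * y) ^ (2 * k) / (2 * k).factorial) ∂μ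
        ≤ ENNReal.ofReal (‖q (2 * k)‖ * (r : ℝ) ^ (2 * k)) := by
    have hint : Integrable (fun y : ℝ => (r * y) ^ (2 * k) / (2 * k).factorial) μ := by
      simpa only [mul_pow] using ((hmoment k).const_mul _).div_const _
    rw [← ofReal_integral_eq_lintegral_ofReal hint (ae_of_all _ fun y =>
      div_nonneg ((even_two_mul k).pow_nonneg _) (by positivity))]
    simp only [mul_pow]
    rw [integral_div, integral_const_mul]
    refine ENNReal.ofReal_le_ofReal ((div_le_iff₀ (by positivity)).mpr ?_)
    calc (r : ℝ) ^ (2 * k) * ∫ y, y ^ (2 * k) ∂μ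
        ≤ (r : ℝ) ^ (2 * k) * ((2 * k).factorial * ‖q (2 * k)‖) := by
          gcongr
          exact integral_pow_le_of_hasFPowerSeriesAt_charFun hq
            ((memLp_id_two_mul_iff_integrable_pow k).mpr (hmoment k))
      _ = ‖q (2 * k)‖ * (r : ℝ) ^ (2 * k) * (2 * k).factorial := by ring
  refine ⟨r, by exact_mod_cast hr0, by fun_prop, ?_⟩
  rw [hasFiniteIntegral_iff_ofReal (ae_of_all _ fun y => (Real.cosh_pos _).le),
    lintegral_ofReal_cosh]
  exact (ENNReal.tsum_le_tsum hterm).trans_lt hsummable.tsum_ofReal_lt_top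

theorem zero_mem_interior_integrableExpSet_of_analyticAt_charFun
    (h : AnalyticAt ℝ (charFun μ) 0) : 0 ∈ interior (integrableExpSet id μ) := by
  obtain ⟨r, hr, hcosh⟩ := exists_integrable_cosh_of_analyticAt_charFun h
  have hmem {c : ℝ} (hc : |c| ≤ r) : c ∈ integrableExpSet id μ := by
    refine (hcosh.const_mul 2).mono' (by fun_prop) (ae_of_all _ fun y => ?_)
    have hle : Real.cosh (c * y) ≤ Real.cosh (r * y) := by
      rw [Real.cosh_le_cosh, abs_mul, abs_mul, abs_of_pos hr]
      gcongr
    rw [Real.norm_of_nonneg (Real.exp_pos _).le, id_eq]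
    linarith [Real.cosh_eq (c * y), Real.exp_pos (-(c * y))]
  exact mem_interior_iff_mem_nhds.mpr <| mem_of_superset (Icc_mem_nhds (neg_lt_zero.mpr hr) hr)
    fun c hc => hmem (abs_le.mpr hc)

end Moments

section ConvPow

/-- The `m`-fold convolution power of `P`, i.e. the law of the `m`-th position of the random walk
started at `0` with step law `P`. -/
noncomputable def convPow {M : Type*} [AddMonoid M] [MeasurableSpace M] (P : Measure M) :
    ℕ → Measure M
  | 0 => Measure.dirac 0
  | m + 1 => P ∗ convPow P m

instance isProbabilityMeasure_convPow {M : Type*} [AddMonoid M] [MeasurableSpace M]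
    [MeasurableAdd₂ M] (P : Measure M) [IsProbabilityMeasure P] (m : ℕ) :
    IsProbabilityMeasure (convPow P m) := by
  induction m <;> rw [convPow] <;> infer_instance

theorem charFun_convPow {E : Type*} [MeasurableSpace E] [NormedAddCommGroup E]
    [InnerProductSpace ℝ E] [BorelSpace E] [SecondCountableTopology E] (P : Measure E)
    [IsProbabilityMeasure P] (m : ℕ) (t : E) : charFun (convPow P m) t = charFun P t ^ m := by
  induction m with
  | zero => simp [convPow]
  | succ m ih => rw [convPow, charFun_conv, ih, pow_succ']

theorem lintegral_convPow {M : Type*} [AddMonoid M] [MeasurableSpace M] [MeasurableAdd₂ M]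
    (P : Measure M) [IsProbabilityMeasure P] {χ : M → ℝ≥0∞} (hχ : Measurable χ) (hzero : χ 0 = 1)
    (hadd : ∀ x y, χ (x + y) = χ x * χ y) (m : ℕ) :
    ∫⁻ x, χ x ∂(convPow P m) = (∫⁻ x, χ x ∂P) ^ m := by
  induction m with
  | zero => simp [convPow, lintegral_dirac' _ hχ, hzero]
  | succ m ih =>
    simp only [convPow, Measure.lintegral_conv hχ, hadd, lintegral_const_mul _ hχ,
      lintegral_mul_const _ hχ, ih, pow_succ']

theorem lintegral_exp_convPow (P : Measure ℝ) [IsProbabilityMeasure P] (m : ℕ) (c : ℝ) :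
    ∫⁻ y, ENNReal.ofReal (Real.exp (c * y)) ∂(convPow P m)
      = (∫⁻ y, ENNReal.ofReal (Real.exp (c * y)) ∂P) ^ m :=
  lintegral_convPow P (by fun_prop) (by simp)
    (fun x y => by rw [mul_add, Real.exp_add, ENNReal.ofReal_mul (Real.exp_pos _).le]) m

end ConvPow

section Bernstein

/-- The Bernstein function `f(z) = β z + ∫_{(0,∞)} (1 - e^{-zs}) ρ(ds)` of the subordinator with
drift `β` and Lévy measure `ρ`. The mass `ρ` gives to `(-∞, 0]` is ignored, and the integral
converges absolutely for `0 ≤ Re z` when `∫_{(0,∞)} min(s, 1) ρ(ds) < ∞`. -/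
noncomputable def laplaceExponent (β : ℝ) (ρ : Measure ℝ) (z : ℂ) : ℂ :=
  β * z + ∫ s in Ioi (0 : ℝ), (1 - cexp (-(z * s))) ∂ρ

/-- The mass that the mixed Poisson law with (possibly infinite) mixing measure `ρ` on `(0, ∞)`
gives to `m`. -/
noncomputable def mixedPoissonWeight (ρ : Measure ℝ) (m : ℕ) : ℝ≥0∞ :=
  ∫⁻ s in Ioi (0 : ℝ), ENNReal.ofReal (Real.exp (-s) * (s ^ m / m.factorial)) ∂ρ

theorem norm_one_sub_cexp_neg_le {z : ℂ} (hz : 0 ≤ z.re) : ‖1 - cexp (-z)‖ ≤ min ‖z‖ 2 := by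
  have hexp {w : ℂ} (hw : 0 ≤ w.re) : ‖cexp (-w)‖ ≤ 1 := by simpa [norm_exp] using hw
  refine le_min ?_ ((norm_sub_le _ _).trans ?_)
  · have hderiv (w : ℂ) : HasDerivAt (fun w => cexp (-w)) (-cexp (-w)) w := by
      simpa using (hasDerivAt_neg w).cexp
    have h := (convex_halfSpace_re_ge 0).norm_image_sub_le_of_norm_deriv_le
      (fun w _ => (hderiv w).differentiableAt) (C := 1)
      (fun w hw => by rw [(hderiv w).deriv, norm_neg]; exact hexp hw) (x := 0) (by simp) hz
    simpa [norm_sub_rev] using h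
  · linarith [hexp hz, norm_one (α := ℂ)]

theorem hasSum_pow_succ_div_factorial {𝔸 : Type*} [NormedDivisionRing 𝔸] [NormedAlgebra ℚ 𝔸]
    [CompleteSpace 𝔸] (x : 𝔸) :
    HasSum (fun m : ℕ => x ^ (m + 1) / ((m + 1).factorial : 𝔸)) (NormedSpace.exp x - 1) := by
  simpa using (hasSum_nat_add_iff' 1).mpr (NormedSpace.expSeries_div_hasSum_exp x)

variable {ρ : Measure ℝ}

theorem integrableOn_one_sub_cexp_neg_mul
    (hρ : ∫⁻ s in Ioi (0 : ℝ), ENNReal.ofReal (min s 1) ∂ρ < ⊤) {z : ℂ} (hz : 0 ≤ z.re) :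
    IntegrableOn (fun s : ℝ => 1 - cexp (-(z * s))) (Ioi 0) ρ := by
  have hmin : IntegrableOn (fun s : ℝ => min s 1) (Ioi 0) ρ := by
    refine ⟨by fun_prop, (hasFiniteIntegral_iff_ofReal ?_).mpr hρ⟩
    filter_upwards [ae_restrict_mem measurableSet_Ioi] with s hs using le_min hs.le zero_le_one
  refine (hmin.const_mul (max ‖z‖ 2)).mono' (by fun_prop) ?_
  filter_upwards [ae_restrict_mem measurableSet_Ioi] with s (hs : 0 < s)
  have hre : 0 ≤ (z * s).re := by simpa using mul_nonneg hz hs.le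
  calc ‖1 - cexp (-(z * s))‖ ≤ min ‖z * s‖ 2 := norm_one_sub_cexp_neg_le hre
    _ = min (‖z‖ * s) 2 := by rw [norm_mul, norm_real, Real.norm_of_nonneg hs.le]
    _ ≤ min (max ‖z‖ 2 * s) (max ‖z‖ 2 * 1) := by
      gcongr
      · exact le_max_left _ _
      · simp
    _ = max ‖z‖ 2 * min s 1 := (mul_min_of_nonneg _ _ (by positivity)).symm

theorem tsum_mixedPoissonWeight_mul_pow {x : ℝ} (hx : 0 ≤ x) :
    ∑' m : ℕ, mixedPoissonWeight ρ (m + 1) * ENNReal.ofReal x ^ (m + 1)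
      = ∫⁻ s in Ioi (0 : ℝ), ENNReal.ofReal (Real.exp (-s) * (Real.exp (x * s) - 1)) ∂ρ := by
  have hmeas (m : ℕ) : Measurable fun s : ℝ =>
      ENNReal.ofReal (Real.exp (-s) * (s ^ m / m.factorial)) := by fun_prop
  simp only [mixedPoissonWeight, ← lintegral_mul_const _ (hmeas _)]
  rw [← lintegral_tsum fun m => by fun_prop]
  refine setLIntegral_congr_fun measurableSet_Ioi fun s (hs : 0 < s) => ?_
  have hsum := (hasSum_pow_succ_div_factorial (x * s)).mul_left (Real.exp (-s))
  rw [← Real.exp_eq_exp_ℝ] at hsum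
  rw [← hsum.tsum_eq, ENNReal.ofReal_tsum_of_nonneg (fun m => by positivity) hsum.summable]
  refine tsum_congr fun m => ?_
  rw [← ENNReal.ofReal_pow hx, ← ENNReal.ofReal_mul (by positivity)]
  ring_nf

theorem exp_neg_mul_exp_sub_one (s : ℝ) :
    Real.exp (-s) * (Real.exp s - 1) = 1 - Real.exp (-s) := by
  rw [mul_sub, ← Real.exp_add, neg_add_cancel, Real.exp_zero, mul_one]

theorem tsum_mixedPoissonWeight_ne_top
    (hρ : ∫⁻ s in Ioi (0 : ℝ), ENNReal.ofReal (min s 1) ∂ρ < ⊤) :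
    ∑' m : ℕ, mixedPoissonWeight ρ (m + 1) ≠ ⊤ := by
  have htsum := tsum_mixedPoissonWeight_mul_pow (ρ := ρ) zero_le_one
  simp only [ENNReal.ofReal_one, one_pow, mul_one, one_mul, exp_neg_mul_exp_sub_one] at htsum
  rw [htsum]
  refine ((lintegral_mono fun s => ENNReal.ofReal_le_ofReal (le_min ?_ ?_)).trans_lt hρ).ne
  · linarith [Real.add_one_le_exp (-s)]
  · linarith [Real.exp_pos (-s)]

theorem toReal_mixedPoissonWeight (m : ℕ) :
    (mixedPoissonWeight ρ m).toReal
      = ∫ s in Ioi (0 : ℝ), Real.exp (-s) * (s ^ m / m.factorial) ∂ρ := by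
  rw [mixedPoissonWeight, integral_eq_lintegral_of_nonneg_ae _ (by fun_prop)]
  filter_upwards [ae_restrict_mem measurableSet_Ioi] with s (hs : 0 < s)
  positivity

theorem hasSum_mixedPoissonWeight_mul_pow
    (hρ : ∫⁻ s in Ioi (0 : ℝ), ENNReal.ofReal (min s 1) ∂ρ < ⊤) {w : ℂ} (hw : ‖w‖ ≤ 1) :
    HasSum (fun m : ℕ => ((mixedPoissonWeight ρ (m + 1)).toReal : ℂ) * w ^ (m + 1))
      (∫ s in Ioi (0 : ℝ), cexp (-s) * (cexp (w * s) - 1) ∂ρ) := by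
  have hbound (s : ℝ) : HasSum
      (fun m : ℕ => Real.exp (-s) * (s ^ (m + 1) / (m + 1).factorial)) (1 - Real.exp (-s)) := by
    rw [← exp_neg_mul_exp_sub_one, Real.exp_eq_exp_ℝ]
    exact (hasSum_pow_succ_div_factorial s).mul_left _
  have hint : Integrable (fun s => 1 - Real.exp (-s)) (ρ.restrict (Ioi 0)) := by
    simpa [← ofReal_neg, exp_ofReal_re] using
      (integrableOn_one_sub_cexp_neg_mul hρ (z := 1) (by simp)).re
  have hsum := hasSum_integral_of_dominated_convergence (μ := ρ.restrict (Ioi 0))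
    (F := fun (m : ℕ) s => ((Real.exp (-s) * (s ^ (m + 1) / (m + 1).factorial) : ℝ) : ℂ)
      * w ^ (m + 1))
    (f := fun s => cexp (-s) * (cexp (w * s) - 1))
    (fun m s => Real.exp (-s) * (s ^ (m + 1) / (m + 1).factorial))
    (fun m => by fun_prop) (fun m => ?_) (ae_of_all _ fun s => (hbound s).summable)
    (by simpa only [(hbound _).tsum_eq] using hint) (ae_of_all _ fun s => ?_)
  · simpa only [integral_mul_const, integral_complex_ofReal, ← toReal_mixedPoissonWeight]
      using hsum
  · filter_upwards [ae_restrict_mem measurableSet_Ioi] with s (hs : 0 < s)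
    rw [norm_mul, norm_real, Real.norm_of_nonneg (by positivity), norm_pow]
    exact mul_le_of_le_one_right (by positivity) (pow_le_one₀ (norm_nonneg _) hw)
  · have hexp := (hasSum_pow_succ_div_factorial (w * s)).mul_left (cexp (-s))
    rw [← Complex.exp_eq_exp_ℂ] at hexp
    refine hexp.congr_fun fun m => ?_
    push_cast
    ring

theorem hasSum_laplaceExponent_sub (β : ℝ)
    (hρ : ∫⁻ s in Ioi (0 : ℝ), ENNReal.ofReal (min s 1) ∂ρ < ⊤) {w : ℂ} (hw : ‖w‖ ≤ 1) :
    HasSum (fun m : ℕ => ((mixedPoissonWeight ρ (m + 1)).toReal : ℂ) * w ^ (m + 1))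
      (laplaceExponent β ρ 1 - laplaceExponent β ρ (1 - w) - β * w) := by
  have hre : 0 ≤ (1 - w).re := by simpa using (re_le_norm w).trans hw
  convert hasSum_mixedPoissonWeight_mul_pow hρ hw using 1
  calc laplaceExponent β ρ 1 - laplaceExponent β ρ (1 - w) - β * w
      = (∫ s in Ioi (0 : ℝ), (1 - cexp (-(1 * s))) ∂ρ)
          - ∫ s in Ioi (0 : ℝ), (1 - cexp (-((1 - w) * s))) ∂ρ := by
        simp only [laplaceExponent]
        ring
    _ = ∫ s in Ioi (0 : ℝ), (1 - cexp (-(1 * s)) - (1 - cexp (-((1 - w) * s)))) ∂ρ :=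
        (integral_sub (integrableOn_one_sub_cexp_neg_mul hρ (by simp))
          (integrableOn_one_sub_cexp_neg_mul hρ hre)).symm
    _ = ∫ s in Ioi (0 : ℝ), cexp (-s) * (cexp (w * s) - 1) ∂ρ := by
        refine integral_congr_ae (ae_of_all _ fun s => ?_)
        simp only [mul_sub, ← Complex.exp_add]
        ring_nf

theorem tsum_mixedPoissonWeight_mul_pow_eq_top
    (hexp : ∀ α : ℝ, 0 < α → ∫⁻ s in Ioi (1 : ℝ), ENNReal.ofReal (Real.exp (α * s)) ∂ρ = ⊤)
    {a : ℝ≥0∞} (ha : 1 < a) :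
    ∑' m : ℕ, mixedPoissonWeight ρ (m + 1) * a ^ (m + 1) = ⊤ := by
  obtain ⟨x, hx1, hxa⟩ := ENNReal.lt_iff_exists_nnreal_btwn.mp ha
  have hx1 : (1 : ℝ) < x := by exact_mod_cast hx1
  have hpoint {s : ℝ} (hs : 1 < s) :
      1 / 2 * Real.exp ((x - 1) * s) ≤ Real.exp (-s) * (Real.exp (x * s) - 1) := by
    have hone : 1 ≤ Real.exp ((x - 1) * s) := Real.one_le_exp (by nlinarith)
    have hhalf : Real.exp (-s) ≤ 1 / 2 := by
      rw [Real.exp_neg, one_div]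
      exact inv_anti₀ two_pos (by linarith [Real.add_one_le_exp s])
    have hsplit : Real.exp (-s) * (Real.exp (x * s) - 1)
        = Real.exp ((x - 1) * s) - Real.exp (-s) := by
      rw [mul_sub, ← Real.exp_add, mul_one]
      ring_nf
    linarith
  refine eq_top_iff.mpr ?_
  calc (⊤ : ℝ≥0∞)
      = ∫⁻ s in Ioi (1 : ℝ), ENNReal.ofReal (1 / 2 * Real.exp ((x - 1) * s)) ∂ρ := by
        simp_rw [ENNReal.ofReal_mul (show (0 : ℝ) ≤ 1 / 2 by norm_num)]
        rw [lintegral_const_mul _ (by fun_prop), hexp _ (sub_pos.mpr hx1),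
          ENNReal.mul_top (by simp)]
    _ ≤ ∫⁻ s in Ioi (1 : ℝ), ENNReal.ofReal (Real.exp (-s) * (Real.exp (x * s) - 1)) ∂ρ :=
        setLIntegral_mono (by fun_prop) fun s hs => ENNReal.ofReal_le_ofReal (hpoint hs)
    _ ≤ ∫⁻ s in Ioi (0 : ℝ), ENNReal.ofReal (Real.exp (-s) * (Real.exp (x * s) - 1)) ∂ρ :=
        lintegral_mono_set (Ioi_subset_Ioi zero_le_one)
    _ = ∑' m : ℕ, mixedPoissonWeight ρ (m + 1) * ENNReal.ofReal x ^ (m + 1) :=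
        (tsum_mixedPoissonWeight_mul_pow x.coe_nonneg).symm
    _ ≤ ∑' m : ℕ, mixedPoissonWeight ρ (m + 1) * a ^ (m + 1) := by
        gcongr
        simpa using hxa.le

end Bernstein

section SubordinatedLevyMeasure

/-- The Lévy measure of the continuous-time random walk with step law `P`, subordinated by a
subordinator with drift `β` and Lévy measure `ρ`: a jump of size `s` of the subordinator makes the
walk take a Poisson(`s`) number of steps. Steps equal to `0` are not discarded, so `0` may carry
mass, which is irrelevant to the Lévy–Khintchine formula. -/
noncomputable def subordinatedLevyMeasure (P : Measure ℝ) (β : ℝ) (ρ : Measure ℝ) : Measure ℝ :=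
  ENNReal.ofReal β • P + Measure.sum fun m : ℕ => mixedPoissonWeight ρ (m + 1) • convPow P (m + 1)

variable {P : Measure ℝ} [IsProbabilityMeasure P] {β : ℝ} {ρ : Measure ℝ}

variable (P β) in
theorem isFiniteMeasure_subordinatedLevyMeasure
    (hρ : ∫⁻ s in Ioi (0 : ℝ), ENNReal.ofReal (min s 1) ∂ρ < ⊤) :
    IsFiniteMeasure (subordinatedLevyMeasure P β ρ) :=
  ⟨by simp [subordinatedLevyMeasure, (tsum_mixedPoissonWeight_ne_top hρ).lt_top]⟩

variable (P) in
theorem charFun_subordinatedLevyMeasure (hβ : 0 ≤ β)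
    (hρ : ∫⁻ s in Ioi (0 : ℝ), ENNReal.ofReal (min s 1) ∂ρ < ⊤) (t : ℝ) :
    charFun (subordinatedLevyMeasure P β ρ) t
      = laplaceExponent β ρ 1 - laplaceExponent β ρ (1 - charFun P t) := by
  have := isFiniteMeasure_subordinatedLevyMeasure P β hρ
  have hint : Integrable (fun y : ℝ => cexp (t * y * I)) (subordinatedLevyMeasure P β ρ) :=
    .of_bound (by fun_prop) 1 <| ae_of_all _ fun y => by rw [← ofReal_mul, norm_exp_ofReal_mul_I]
  rw [charFun_apply_real]
  unfold subordinatedLevyMeasure at hint ⊢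
  rw [integral_add_measure hint.left_of_add_measure hint.right_of_add_measure,
    integral_smul_measure, integral_sum_measure hint.right_of_add_measure]
  simp only [integral_smul_measure, ← charFun_apply_real, charFun_convPow, real_smul]
  rw [(hasSum_laplaceExponent_sub β hρ (norm_charFun_le_one t)).tsum_eq, ENNReal.toReal_ofReal hβ]
  ring

variable (P β) in
theorem lintegral_exp_subordinatedLevyMeasure_eq_top
    (hexp : ∀ α : ℝ, 0 < α → ∫⁻ s in Ioi (1 : ℝ), ENNReal.ofReal (Real.exp (α * s)) ∂ρ = ⊤)
    {c : ℝ} (hc : 1 < ∫⁻ y, ENNReal.ofReal (Real.exp (c * y)) ∂P) :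
    ∫⁻ y, ENNReal.ofReal (Real.exp (c * y)) ∂(subordinatedLevyMeasure P β ρ) = ⊤ := by
  simp [subordinatedLevyMeasure, lintegral_sum_measure, lintegral_exp_convPow,
    tsum_mixedPoissonWeight_mul_pow_eq_top hexp hc]

theorem one_lt_lintegral_cosh (hP : P {0}ᶜ ≠ 0) {δ : ℝ} (hδ : δ ≠ 0) :
    1 < ∫⁻ y, ENNReal.ofReal (Real.cosh (δ * y)) ∂P := by
  have hlt : ∫⁻ _, 1 ∂P < ∫⁻ y, ENNReal.ofReal (Real.cosh (δ * y)) ∂P := by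
    refine lintegral_strict_mono_of_ae_le_of_frequently_ae_lt (by fun_prop) (by simp)
      (ae_of_all _ fun y => by simp [Real.one_le_cosh]) fun h => hP ?_
    refine measure_mono_null (fun y (hy : y ≠ 0) => ?_) (mem_ae_iff.mp h)
    have hcosh : 1 < Real.cosh (δ * y) := Real.one_lt_cosh.mpr (mul_ne_zero hδ hy)
    simpa using (ENNReal.one_lt_ofReal.mpr hcosh).ne
  simpa using hlt

theorem one_lt_lintegral_exp_or (hP : P {0}ᶜ ≠ 0) {δ : ℝ} (hδ : δ ≠ 0) :
    1 < ∫⁻ y, ENNReal.ofReal (Real.exp (δ * y)) ∂P ∨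
      1 < ∫⁻ y, ENNReal.ofReal (Real.exp (-δ * y)) ∂P := by
  by_contra! hle
  refine (one_lt_lintegral_cosh hP hδ).not_ge ?_
  have hcosh (y : ℝ) : ENNReal.ofReal (Real.cosh (δ * y))
      = 2⁻¹ * (ENNReal.ofReal (Real.exp (δ * y)) + ENNReal.ofReal (Real.exp (-δ * y))) := by
    rw [← ENNReal.ofReal_add (Real.exp_pos _).le (Real.exp_pos _).le, Real.cosh_eq, neg_mul,
      div_eq_inv_mul, ENNReal.ofReal_mul (by positivity), ENNReal.ofReal_inv_of_pos two_pos,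
      ENNReal.ofReal_ofNat]
  calc ∫⁻ y, ENNReal.ofReal (Real.cosh (δ * y)) ∂P
      = 2⁻¹ * (∫⁻ y, ENNReal.ofReal (Real.exp (δ * y)) ∂P
          + ∫⁻ y, ENNReal.ofReal (Real.exp (-δ * y)) ∂P) := by
        simp only [hcosh]
        rw [lintegral_const_mul _ (by fun_prop), lintegral_add_left (by fun_prop)]
    _ ≤ 2⁻¹ * (1 + 1) := by
        gcongr
        exacts [hle.1, hle.2]
    _ = 1 := by rw [one_add_one_eq_two, ENNReal.inv_mul_cancel two_ne_zero ENNReal.ofNat_ne_top]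

variable (β) in
theorem zero_notMem_interior_integrableExpSet_subordinatedLevyMeasure (hP : P {0}ᶜ ≠ 0)
    (hexp : ∀ α : ℝ, 0 < α → ∫⁻ s in Ioi (1 : ℝ), ENNReal.ofReal (Real.exp (α * s)) ∂ρ = ⊤) :
    0 ∉ interior (integrableExpSet id (subordinatedLevyMeasure P β ρ)) := by
  intro h
  obtain ⟨ε, hε, hball⟩ := Metric.mem_nhds_iff.mp (mem_interior_iff_mem_nhds.mp h)
  have hle {c : ℝ} (hc : |c| = ε / 2) : ∫⁻ y, ENNReal.ofReal (Real.exp (c * y)) ∂P ≤ 1 := by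
    by_contra! hlt
    have hint : Integrable (fun y => Real.exp (c * y)) (subordinatedLevyMeasure P β ρ) :=
      hball (by simp [hc, hε])
    exact hint.lintegral_lt_top.ne (lintegral_exp_subordinatedLevyMeasure_eq_top P β hexp hlt)
  have habs : |ε / 2| = ε / 2 := abs_of_pos (half_pos hε)
  rcases one_lt_lintegral_exp_or hP (half_pos hε).ne' with hlt | hlt
  · exact hlt.not_ge (hle habs)
  · exact hlt.not_ge (hle ((abs_neg _).trans habs))

variable (P) in
theorem continuous_laplaceExponent_one_sub_charFun (hβ : 0 ≤ β)
    (hρ : ∫⁻ s in Ioi (0 : ℝ), ENNReal.ofReal (min s 1) ∂ρ < ⊤) :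
    Continuous fun t => laplaceExponent β ρ (1 - charFun P t) := by
  have := isFiniteMeasure_subordinatedLevyMeasure P β hρ
  have hcharFun : Continuous (charFun (subordinatedLevyMeasure P β ρ)) := continuous_charFun
  simpa [Pi.sub_def, charFun_subordinatedLevyMeasure P hβ hρ] using
    (continuous_const (y := laplaceExponent β ρ 1)).sub hcharFun

theorem not_analyticAt_laplaceExponent_one_sub_charFun (hP : P {0}ᶜ ≠ 0) (hβ : 0 ≤ β)
    (hρ : ∫⁻ s in Ioi (0 : ℝ), ENNReal.ofReal (min s 1) ∂ρ < ⊤)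
    (hexp : ∀ α : ℝ, 0 < α → ∫⁻ s in Ioi (1 : ℝ), ENNReal.ofReal (Real.exp (α * s)) ∂ρ = ⊤) :
    ¬ AnalyticAt ℝ (fun t => laplaceExponent β ρ (1 - charFun P t)) 0 := by
  intro h
  have := isFiniteMeasure_subordinatedLevyMeasure P β hρ
  have hcharFun : AnalyticAt ℝ (charFun (subordinatedLevyMeasure P β ρ)) 0 := by
    rw [funext (charFun_subordinatedLevyMeasure P hβ hρ)]
    exact analyticAt_const.sub h
  exact zero_notMem_interior_integrableExpSet_subordinatedLevyMeasure β hP hexp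
    (zero_mem_interior_integrableExpSet_of_analyticAt_charFun hcharFun)

end SubordinatedLevyMeasure

section Lattice

theorem exists_linearIndependent_int_real (ι : Type*) [Finite ι] :
    ∃ η : ι → ℝ, LinearIndependent ℤ η := by
  let b := Module.Basis.ofVectorSpace ℚ ℝ
  have : Infinite (Module.Basis.ofVectorSpaceIndex ℚ ℝ) := by
    rw [Cardinal.infinite_iff, b.mk_eq_rank'', Real.rank_rat_real]
    exact Cardinal.aleph0_le_continuum
  obtain ⟨e⟩ : Nonempty (ι ↪ Module.Basis.ofVectorSpaceIndex ℚ ℝ) := by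
    rw [← Cardinal.lift_mk_le']
    exact (Cardinal.lift_lt_aleph0.mpr (Cardinal.lt_aleph0_of_finite ι)).le.trans (by simp)
  exact ⟨b ∘ e, (b.linearIndependent.comp e e.injective).restrict_scalars' ℤ⟩

theorem linearIndependent_cexp_ofReal_mul_I :
    LinearIndependent ℂ (fun (a t : ℝ) => cexp (a * t * I)) := by
  let χ : ℝ → Multiplicative ℝ →* ℂ := fun a =>
    Circle.coeHom.comp (Real.probChar.mulShift a).toMonoidHom
  have hχ_apply (a t : ℝ) : χ a (.ofAdd t) = cexp (a * t * I) := by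
    change ((Real.probChar (a * t) : Circle) : ℂ) = _
    rw [Real.probChar_apply, ofReal_mul]
  have hprobChar : Real.probChar ≠ 1 := fun h => by
    have hpi : cexp (Real.pi * I) = 1 := by
      rw [← Real.probChar_apply, h, AddChar.one_apply, Circle.coe_one]
    norm_num [exp_pi_mul_I] at hpi
  have hχ : Function.Injective χ := fun a b hab =>
    AddChar.to_mulShift_inj_of_isPrimitive (.of_ne_one hprobChar) <|
      DFunLike.ext _ _ fun t => Circle.ext (DFunLike.congr_fun hab (.ofAdd t))
  have hind := (linearIndependent_monoidHom (Multiplicative ℝ) ℂ).comp χ hχ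
  rwa [show (fun (a t : ℝ) => cexp (a * t * I)) = fun a => ⇑(χ a) ∘ Multiplicative.ofAdd from
    funext fun a => funext fun t => (hχ_apply a t).symm]

variable {ι : Type*} [Fintype ι]

/-- The Fourier series `û(ξ) = ∑ k, u(k) e^{i k·ξ}` of a sequence on the lattice. -/
noncomputable def fourierSeries (u : (ι → ℤ) → ℂ) (ξ : ι → ℝ) : ℂ :=
  ∑' k, u k * cexp (I * ∑ i, (k i : ℂ) * (ξ i : ℂ))

/-- The characteristic exponent `ψ_R(ξ) = ∑ ℓ, p(ℓ) (1 - e^{i ℓ·ξ})` of the continuous-time random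
walk with step distribution `p`. -/
noncomputable def walkExponent (p : (ι → ℤ) → ℝ) (ξ : ι → ℝ) : ℂ :=
  ∑' ℓ, (p ℓ : ℂ) * (1 - cexp (I * ∑ i, (ℓ i : ℂ) * (ξ i : ℂ)))

/-- The law on the line of `ℓ·η`, where `ℓ` is distributed according to `p`. -/
noncomputable def projectedStepLaw (p : (ι → ℤ) → ℝ) (η : ι → ℝ) : Measure ℝ :=
  Measure.sum fun ℓ =>
    ENNReal.ofReal (p ℓ) • Measure.dirac (Fintype.linearCombination ℤ η ℓ)

variable {p : (ι → ℤ) → ℝ} {u : (ι → ℤ) → ℂ} {η : ι → ℝ}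

theorem cexp_phase_smul (k : ι → ℤ) (t : ℝ) (η : ι → ℝ) :
    cexp (I * ∑ i, (k i : ℂ) * ((t • η) i : ℂ))
      = cexp ((Fintype.linearCombination ℤ η k : ℝ) * t * I) := by
  simp only [Fintype.linearCombination_apply, Pi.smul_apply, smul_eq_mul, zsmul_eq_mul,
    ofReal_sum, ofReal_mul, ofReal_intCast, Finset.mul_sum, Finset.sum_mul]
  congr! 2 with i
  ring

theorem fourierSeries_smul (hu : (Function.support u).Finite) (η : ι → ℝ) :
    (fun t : ℝ => fourierSeries u (t • η)) = ∑ k ∈ hu.toFinset,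
      u k • fun t : ℝ => cexp ((Fintype.linearCombination ℤ η k : ℝ) * t * I) := by
  ext t
  simp only [fourierSeries, cexp_phase_smul]
  simp only [Finset.sum_apply, Pi.smul_apply, smul_eq_mul]
  refine tsum_eq_sum fun k hk => ?_
  rw [show u k = 0 by simpa using hk, zero_mul]

theorem analyticAt_fourierSeries_smul (hu : (Function.support u).Finite) (η : ι → ℝ) (t : ℝ) :
    AnalyticAt ℝ (fun t : ℝ => fourierSeries u (t • η)) t := by
  rw [fourierSeries_smul hu]
  refine Finset.analyticAt_sum _ fun k _ => analyticAt_const.smul ?_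
  exact analyticAt_cexp.restrictScalars.comp
    ((analyticAt_const.mul (ofRealCLM.analyticAt t)).mul analyticAt_const)

theorem eq_zero_of_fourierSeries_smul_eventuallyEq_zero (hη : LinearIndependent ℤ η)
    (hu : (Function.support u).Finite) {t₀ : ℝ}
    (h : (fun t : ℝ => fourierSeries u (t • η)) =ᶠ[𝓝 t₀] 0) : u = 0 := by
  have hzero : (fun t : ℝ => fourierSeries u (t • η)) = 0 :=
    AnalyticOnNhd.eq_of_eventuallyEq (fun t _ => analyticAt_fourierSeries_smul hu η t)
      (fun t _ => analyticAt_const) h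
  rw [fourierSeries_smul hu] at hzero
  have hind := linearIndependent_iff'.mp (linearIndependent_cexp_ofReal_mul_I.comp _
    (linearIndependent_iff_injective_fintypeLinearCombination.mp hη)) hu.toFinset u hzero
  funext k
  by_contra hk
  exact hk (hind k (by simpa using hk))

theorem isProbabilityMeasure_projectedStepLaw (hp : HasSum p 1) (hpnn : ∀ ℓ, 0 ≤ p ℓ)
    (η : ι → ℝ) : IsProbabilityMeasure (projectedStepLaw p η) :=
  ⟨by simp [projectedStepLaw, ← ENNReal.ofReal_tsum_of_nonneg hpnn hp.summable, hp.tsum_eq]⟩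

theorem projectedStepLaw_compl_zero_ne_zero (hη : LinearIndependent ℤ η) (hp : HasSum p 1)
    (hpnn : ∀ ℓ, 0 ≤ p ℓ) (hne : p 0 ≠ 1) : projectedStepLaw p η {0}ᶜ ≠ 0 := by
  obtain ⟨ℓ, hℓ0, hpℓ⟩ : ∃ ℓ ≠ 0, p ℓ ≠ 0 := by
    by_contra! hzero
    exact hne ((hasSum_single 0 hzero).unique hp)
  have hX : Fintype.linearCombination ℤ η ℓ ≠ 0 :=
    (map_ne_zero_iff _ (linearIndependent_iff_injective_fintypeLinearCombination.mp hη)).mpr hℓ0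
  refine (lt_of_lt_of_le ?_ (Measure.le_sum (fun ℓ => ENNReal.ofReal (p ℓ) •
    Measure.dirac (Fintype.linearCombination ℤ η ℓ)) ℓ {0}ᶜ)).ne'
  simpa [hX] using (hpnn ℓ).lt_of_ne' hpℓ

theorem walkExponent_smul (hp : HasSum p 1) (hpnn : ∀ ℓ, 0 ≤ p ℓ) (η : ι → ℝ) (t : ℝ) :
    walkExponent p (t • η) = 1 - charFun (projectedStepLaw p η) t := by
  have hpC : HasSum (fun ℓ => (p ℓ : ℂ)) 1 := by
    simpa using hasSum_ofReal.mpr hp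
  have hsummable : Summable fun ℓ =>
      (p ℓ : ℂ) * cexp ((Fintype.linearCombination ℤ η ℓ : ℝ) * t * I) := by
    refine .of_norm (hp.summable.congr fun ℓ => ?_)
    rw [norm_mul, norm_real, Real.norm_of_nonneg (hpnn ℓ), ← ofReal_mul, norm_exp_ofReal_mul_I,
      mul_one]
  have hcharFun : charFun (projectedStepLaw p η) t
      = ∑' ℓ, (p ℓ : ℂ) * cexp ((Fintype.linearCombination ℤ η ℓ : ℝ) * t * I) := by
    rw [charFun_apply_real, projectedStepLaw, integral_sum_dirac fun _ => ENNReal.ofReal_ne_top]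
    simp only [ENNReal.toReal_ofReal (hpnn _), real_smul, mul_comm (t : ℂ)]
  simp only [walkExponent, cexp_phase_smul, mul_sub, mul_one]
  rw [hpC.summable.tsum_sub hsummable, hpC.tsum_eq, hcharFun]

theorem re_walkExponent_nonneg (hp : HasSum p 1) (hpnn : ∀ ℓ, 0 ≤ p ℓ) (ξ : ι → ℝ) :
    0 ≤ (walkExponent p ξ).re := by
  have := isProbabilityMeasure_projectedStepLaw hp hpnn ξ
  rw [← one_smul ℝ ξ, walkExponent_smul hp hpnn, sub_re, one_re, sub_nonneg]
  exact (re_le_norm _).trans (norm_charFun_le_one 1)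

end Lattice

theorem subordinated_discrete_levy_ucp_general {ι : Type*} [Fintype ι] {p : (ι → ℤ) → ℝ}
    (hp : HasSum p 1) (hpnn : ∀ ℓ, 0 ≤ p ℓ) (hne : p 0 ≠ 1) {β : ℝ} (hβ : 0 ≤ β) {ρ : Measure ℝ}
    (hρ : ∫⁻ s in Ioi (0 : ℝ), ENNReal.ofReal (min s 1) ∂ρ < ⊤)
    (hexp : ∀ α : ℝ, 0 < α → ∫⁻ s in Ioi (1 : ℝ), ENNReal.ofReal (Real.exp (α * s)) ∂ρ = ⊤)
    {u v : (ι → ℤ) → ℂ} (hu : (Function.support u).Finite) (hv : (Function.support v).Finite)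
    (heq : ∀ᶠ ξ in 𝓝 (0 : ι → ℝ),
      fourierSeries v ξ = laplaceExponent β ρ (walkExponent p ξ) * fourierSeries u ξ) :
    u = 0 := by
  obtain ⟨η, hη⟩ := exists_linearIndependent_int_real ι
  have := isProbabilityMeasure_projectedStepLaw hp hpnn η
  have hline : Tendsto (fun t : ℝ => t • η) (𝓝 0) (𝓝 0) :=
    Continuous.tendsto' (by fun_prop) _ _ (zero_smul ℝ η)
  by_contra hu0
  refine not_analyticAt_laplaceExponent_one_sub_charFun
    (projectedStepLaw_compl_zero_ne_zero hη hp hpnn hne) hβ hρ hexp ?_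
  refine analyticAt_of_mul_eventuallyEq
    (continuous_laplaceExponent_one_sub_charFun _ hβ hρ).continuousAt
    (analyticAt_fourierSeries_smul hu η 0) (analyticAt_fourierSeries_smul hv η 0)
    (fun h => hu0 (eq_zero_of_fourierSeries_smul_eventuallyEq_zero hη hu h)) ?_
  filter_upwards [hline.eventually heq] with t ht
  rw [ht, Pi.mul_apply, walkExponent_smul hp hpnn]

/-- Unique continuation for the subordinated discrete Lévy operator `f(-A_R)`: if the
subordinator's Lévy measure `ρ` has no positive exponential moments, the random walk is
non-degenerate, and `u`, `v = f(-A_R)u` are finitely supported sequences whose Fourier series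
satisfy `v̂ = ψ·û` with `ψ(ξ) = f(ψ_R(ξ))`, then `u = 0`. -/
theorem subordinated_discrete_levy_ucp
    (n : ℕ) (hn : 1 ≤ n)
    (p : (Fin n → ℤ) → ℝ)
    (hp0 : p 0 = 0) (hpnn : ∀ ℓ, 0 ≤ p ℓ) (hple : ∀ ℓ, p ℓ ≤ 1)
    (hpsum : Summable p) (hp1 : ∑' ℓ, p ℓ = 1)
    (hnd : Submodule.span ℝ
      ((fun ℓ : Fin n → ℤ => fun i => (ℓ i : ℝ)) '' {ℓ | 0 < p ℓ}) = ⊤)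
    (β : ℝ) (hβ : 0 ≤ β)
    (ρ : Measure ℝ) (hρsupp : ρ (Set.Iic 0) = 0)
    (hρint : ∫⁻ s in Set.Ioi (0 : ℝ), ENNReal.ofReal (min s 1) ∂ρ < ⊤)
    (hnoexp : ∀ α : ℝ, 0 < α →
      ∫⁻ s in Set.Ioi (1 : ℝ), ENNReal.ofReal (Real.exp (α * s)) ∂ρ = ⊤)
    (f : ℂ → ℂ)
    (hf : ∀ z : ℂ, 0 ≤ z.re →
      f z = (β : ℂ) * z + ∫ s in Set.Ioi (0 : ℝ), (1 - Complex.exp (-(z * s))) ∂ρ)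
    (ψR : (Fin n → ℝ) → ℂ)
    (hψR : ∀ ξ : Fin n → ℝ, ψR ξ =
      ∑' ℓ : Fin n → ℤ, (p ℓ : ℂ) * (1 - Complex.exp (Complex.I * ∑ i, (ℓ i : ℂ) * (ξ i : ℂ))))
    (u v : (Fin n → ℤ) → ℂ)
    (hufin : (Function.support u).Finite) (hvfin : (Function.support v).Finite)
    (heq : ∀ ξ : Fin n → ℝ,
      ∑' k : Fin n → ℤ, v k * Complex.exp (Complex.I * ∑ i, (k i : ℂ) * (ξ i : ℂ))
        = f (ψR ξ) * ∑' k : Fin n → ℤ, u k * Complex.exp (Complex.I * ∑ i, (k i : ℂ) * (ξ i : ℂ))) :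
    u = 0 := by
  have hp : HasSum p 1 := hp1 ▸ hpsum.hasSum
  refine subordinated_discrete_levy_ucp_general hp hpnn (by simp [hp0]) hβ hρint hnoexp hufin hvfin
    (.of_forall fun ξ => ?_)
  have hψ : ψR ξ = walkExponent p ξ := hψR ξ
  rw [laplaceExponent, ← hf _ (re_walkExponent_nonneg hp hpnn ξ), ← hψ]
  exact heq ξ
end
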